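/- arXiv:2510.25482 — 2 statements merged into one kernel-verified Lean document; each statement's English description precedes it below -/
import Mathlib

section
/- Let P1 and P2 be m×n matrix pencils such that orbᵉ(P2) ⊂ closure(orbᵉ(P1)). Then P2 can be obtained from P1 by changing the canonical blocks of P1 through a finite sequence of structure transitions, each of one of the following six types (a structure transition X ⇝ Y replaces summands X of the Kronecker canonical form by summands Y of the same total size): G1: L_j ⊕ L_k ⇝ L_{j−1} ⊕ L_{k+1} for 1 ≤ j ≤ k; G2: L_jᵀ ⊕ L_kᵀ ⇝ L_{j−1}ᵀ ⊕ L_{k+1}ᵀ for 1 ≤ j ≤ k; G3: L_{j+1} ⊕ E_k(μ) ⇝ L_j ⊕ E_{k+1}(μ) for j,k ≥ 0 and μ ∈ ℂ ∪ {∞}; G4: L_{j+1}ᵀ ⊕ E_k(μ) ⇝ L_jᵀ ⊕ E_{k+1}(μ) for j,k ≥ 0 and μ ∈ ℂ ∪ {∞}; G5: E_{j−1}(μ) ⊕ E_{k+1}(μ) ⇝ E_j(μ) ⊕ E_k(μ) for 1 ≤ j ≤ k and μ ∈ ℂ ∪ {∞}; G6: ⊕_{i=1}^t E_{k_i}(μ_i)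 ⇝ L_p ⊕ L_qᵀ, where p + q + 1 = Σ_{i=1}^t k_i and the μ_i ∈ ℂ ∪ {∞} are pairwise distinct. -/
/-!
Basic framework: a complex `m × n` matrix pencil `A - λ B` is formalized as the
pair `(A, B)` of matrices.  We define strict equivalence, congruence,
skew-symmetry, orbits, direct sums, and the cover relations for the orbit
closure hierarchies (in the Euclidean topology).
-/

open Matrix

noncomputable section

/-- An `m × n` complex matrix pencil `A - λ B`, formalized as the pair `(A, B)`. -/
abbrev Pencil (m n : ℕ) : Type :=
  Matrix (Fin m) (Fin n) ℂ × Matrix (Fin m) (Fin n) ℂ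

namespace Pencil

/-- Strict equivalence of matrix pencils: `Q⁻¹ * A * R = C` and `Q⁻¹ * B * R = D`
for some invertible `Q`, `R`. -/
def StrictEquiv {m n : ℕ} (P Q : Pencil m n) : Prop :=
  ∃ (S : Matrix (Fin m) (Fin m) ℂ) (R : Matrix (Fin n) (Fin n) ℂ),
    IsUnit S ∧ IsUnit R ∧ S⁻¹ * P.1 * R = Q.1 ∧ S⁻¹ * P.2 * R = Q.2

/-- The strict-equivalence orbit of a pencil. -/
def orbE {m n : ℕ} (P : Pencil m n) : Set (Pencil m n) :=
  {Q | StrictEquiv P Q}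

/-- A pencil `A - λ B` is skew-symmetric if `Aᵀ = -A` and `Bᵀ = -B`. -/
def IsSkew {n : ℕ} (P : Pencil n n) : Prop :=
  P.1ᵀ = -P.1 ∧ P.2ᵀ = -P.2

/-- Congruence of (square) matrix pencils: `Sᵀ * A * S = C` and `Sᵀ * B * S = D`
for some invertible `S`. -/
def Congruent {n : ℕ} (P Q : Pencil n n) : Prop :=
  ∃ S : Matrix (Fin n) (Fin n) ℂ,
    IsUnit S ∧ Sᵀ * P.1 * S = Q.1 ∧ Sᵀ * P.2 * S = Q.2

/-- The congruence orbit of a pencil. -/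
def orbC {n : ℕ} (P : Pencil n n) : Set (Pencil n n) :=
  {Q | Congruent P Q}

/-- Direct (block-diagonal) sum of two pencils. -/
def dsum {m n p q : ℕ} (P : Pencil m n) (Q : Pencil p q) : Pencil (m + p) (n + q) :=
  ((fromBlocks P.1 0 0 Q.1).submatrix finSumFinEquiv.symm finSumFinEquiv.symm,
   (fromBlocks P.2 0 0 Q.2).submatrix finSumFinEquiv.symm finSumFinEquiv.symm)

/-- Transport a pencil along equalities of its dimensions. -/
def cast {m n m' n' : ℕ} (hm : m = m') (hn : n = n') (P : Pencil m n) : Pencil m' n' :=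
  (P.1.submatrix (finCongr hm.symm) (finCongr hn.symm),
   P.2.submatrix (finCongr hm.symm) (finCongr hn.symm))

/-- `orbE P1` covers `orbE P2` in the closure hierarchy of strict-equivalence
orbits: `P1` is not strictly equivalent to `P2`, `orbE P2 ⊆ closure (orbE P1)`,
and there is no intermediate orbit strictly between them. -/
def CoversE {m n : ℕ} (P1 P2 : Pencil m n) : Prop :=
  ¬ StrictEquiv P1 P2 ∧ orbE P2 ⊆ closure (orbE P1) ∧
    ¬ ∃ P : Pencil m n, ¬ StrictEquiv P P1 ∧ ¬ StrictEquiv P P2 ∧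
        orbE P ⊆ closure (orbE P1) ∧ orbE P2 ⊆ closure (orbE P)

/-- `orbC P1` covers `orbC P2` in the closure hierarchy of congruence orbits of
skew-symmetric pencils: `P1` is not congruent to `P2`,
`orbC P2 ⊆ closure (orbC P1)`, and there is no congruence orbit of a
skew-symmetric pencil strictly between them. -/
def CoversC {n : ℕ} (P1 P2 : Pencil n n) : Prop :=
  ¬ Congruent P1 P2 ∧ orbC P2 ⊆ closure (orbC P1) ∧
    ¬ ∃ P : Pencil n n, IsSkew P ∧ ¬ Congruent P P1 ∧ ¬ Congruent P P2 ∧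
        orbC P ⊆ closure (orbC P1) ∧ orbC P2 ⊆ closure (orbC P)

end Pencil

/-! Canonical building blocks. -/

/-- The `k × k` Jordan block `J_k(μ)`. -/
def Jmat (k : ℕ) (μ : ℂ) : Matrix (Fin k) (Fin k) ℂ :=
  Matrix.of fun i j => if (j : ℕ) = (i : ℕ) then μ else if (j : ℕ) = (i : ℕ) + 1 then 1 else 0

/-- The `k × (k+1)` matrix `F_k` with ones on the superdiagonal. -/
def Fmat (k : ℕ) : Matrix (Fin k) (Fin (k + 1)) ℂ :=
  Matrix.of fun i j => if (j : ℕ) = (i : ℕ) + 1 then 1 else 0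

/-- The `k × (k+1)` matrix `G_k` with ones on the diagonal. -/
def Gmat (k : ℕ) : Matrix (Fin k) (Fin (k + 1)) ℂ :=
  Matrix.of fun i j => if (j : ℕ) = (i : ℕ) then 1 else 0

/-- The Kronecker block `E_k(μ) = J_k(μ) - λ I_k`. -/
def Eblk (k : ℕ) (μ : ℂ) : Pencil k k := (Jmat k μ, 1)

/-- The Kronecker block `E_k(∞) = I_k - λ J_k(0)`. -/
def EInfblk (k : ℕ) : Pencil k k := (1, Jmat k 0)

/-- The Kronecker block `L_k = F_k - λ G_k`. -/
def Lblk (k : ℕ) : Pencil k (k + 1) := (Fmat k, Gmat k)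

/-- The Kronecker block `L_kᵀ = F_kᵀ - λ G_kᵀ`. -/
def LTblk (k : ℕ) : Pencil (k + 1) k := ((Fmat k)ᵀ, (Gmat k)ᵀ)

/-- The skew-symmetric matrix `[[0, X], [-Xᵀ, 0]]`. -/
def skewPair {p q : ℕ} (X : Matrix (Fin p) (Fin q) ℂ) :
    Matrix (Fin (p + q)) (Fin (p + q)) ℂ :=
  (fromBlocks 0 X (-Xᵀ) 0).submatrix finSumFinEquiv.symm finSumFinEquiv.symm

/-- The skew-symmetric canonical block `H_h(μ)` (size `2h × 2h`). -/
def Hblk (h : ℕ) (μ : ℂ) : Pencil (h + h) (h + h) :=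
  (skewPair (Jmat h μ), skewPair (1 : Matrix (Fin h) (Fin h) ℂ))

/-- The skew-symmetric canonical block `K_k = H_k(∞)` (size `2k × 2k`). -/
def Kblk (k : ℕ) : Pencil (k + k) (k + k) :=
  (skewPair (1 : Matrix (Fin k) (Fin k) ℂ), skewPair (Jmat k 0))

/-- The skew-symmetric canonical block `M_m` (size `(2m+1) × (2m+1)`). -/
def Mblk (m : ℕ) : Pencil (m + (m + 1)) (m + (m + 1)) :=
  (skewPair (Fmat m), skewPair (Gmat m))

/-! Kronecker canonical forms as multisets of block descriptors. -/

/-- Descriptor of a Kronecker canonical block. -/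
inductive KBlock : Type
  | E : ℕ → ℂ → KBlock        -- `E_k(μ)`, `μ ∈ ℂ`
  | Einf : ℕ → KBlock          -- `E_k(∞)`
  | L : ℕ → KBlock             -- `L_k`
  | LT : ℕ → KBlock            -- `L_kᵀ`

namespace KBlock

/-- Number of rows of a block. -/
def rows : KBlock → ℕ
  | E k _ => k
  | Einf k => k
  | L k => k
  | LT k => k + 1

/-- Number of columns of a block. -/
def cols : KBlock → ℕ
  | E k _ => k
  | Einf k => k
  | L k => k + 1
  | LT k => k

/-- The index of a block. -/
def idx : KBlock → ℕ
  | E k _ => k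
  | Einf k => k
  | L k => k
  | LT k => k

/-- A block is valid (may occur in a Kronecker canonical form) if Jordan blocks
have size at least one. -/
def valid : KBlock → Prop
  | E k _ => 1 ≤ k
  | Einf k => 1 ≤ k
  | L _ => True
  | LT _ => True

/-- The pencil corresponding to a block descriptor. -/
def toPencil : (b : KBlock) → Pencil b.rows b.cols
  | E k μ => Eblk k μ
  | Einf k => EInfblk k
  | L k => Lblk k
  | LT k => LTblk k

end KBlock

/-- The block `E_k(μ)` for an eigenvalue `μ ∈ ℂ ∪ {∞}`; `none` encodes `∞`. -/
def Eb : Option ℂ → ℕ → KBlock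
  | some μ, k => KBlock.E k μ
  | none, k => KBlock.Einf k

/-- Total number of rows of a list of blocks. -/
def rowsSum : List KBlock → ℕ
  | [] => 0
  | b :: t => b.rows + rowsSum t

/-- Total number of columns of a list of blocks. -/
def colsSum : List KBlock → ℕ
  | [] => 0
  | b :: t => b.cols + colsSum t

/-- The direct sum of the blocks in a list. -/
def pencilOfList : (l : List KBlock) → Pencil (rowsSum l) (colsSum l)
  | [] => (0, 0)
  | b :: t => Pencil.dsum b.toPencil (pencilOfList t)

/-- `s` is the multiset of blocks of a Kronecker canonical form of `P`, i.e. `P`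
is strictly equivalent to the direct sum of the blocks of `s`. -/
def RepresentsE {m n : ℕ} (P : Pencil m n) (s : Multiset KBlock) : Prop :=
  (∀ b ∈ s, b.valid) ∧
  ∃ (l : List KBlock) (hm : rowsSum l = m) (hn : colsSum l = n),
    (l : Multiset KBlock) = s ∧
    Pencil.StrictEquiv (Pencil.cast hm hn (pencilOfList l)) P

/-- Like `RepresentsE`, but also allowing degenerate (empty) blocks such as
`E_0(μ)` among the summands. -/
def WeakRepresentsE {m n : ℕ} (P : Pencil m n) (s : Multiset KBlock) : Prop :=
  ∃ (l : List KBlock) (hm : rowsSum l = m) (hn : colsSum l = n),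
    (l : Multiset KBlock) = s ∧
    Pencil.StrictEquiv (Pencil.cast hm hn (pencilOfList l)) P

/-- One structure transition of type G1–G6 (Theorem 2.2) on a Kronecker
canonical form, viewed as a multiset of blocks. -/
def TransG (s t : Multiset KBlock) : Prop :=
  -- G1: `L_j ⊕ L_k ⇝ L_{j-1} ⊕ L_{k+1}`, `1 ≤ j ≤ k`
  (∃ (j k : ℕ) (rest : Multiset KBlock), 1 ≤ j ∧ j ≤ k ∧
      s = KBlock.L j ::ₘ KBlock.L k ::ₘ rest ∧
      t = KBlock.L (j - 1) ::ₘ KBlock.L (k + 1) ::ₘ rest) ∨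
  -- G2: `L_jᵀ ⊕ L_kᵀ ⇝ L_{j-1}ᵀ ⊕ L_{k+1}ᵀ`, `1 ≤ j ≤ k`
  (∃ (j k : ℕ) (rest : Multiset KBlock), 1 ≤ j ∧ j ≤ k ∧
      s = KBlock.LT j ::ₘ KBlock.LT k ::ₘ rest ∧
      t = KBlock.LT (j - 1) ::ₘ KBlock.LT (k + 1) ::ₘ rest) ∨
  -- G3: `L_{j+1} ⊕ E_k(μ) ⇝ L_j ⊕ E_{k+1}(μ)`, `μ ∈ ℂ ∪ {∞}`
  (∃ (j k : ℕ) (μ : Option ℂ) (rest : Multiset KBlock),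
      s = KBlock.L (j + 1) ::ₘ Eb μ k ::ₘ rest ∧
      t = KBlock.L j ::ₘ Eb μ (k + 1) ::ₘ rest) ∨
  -- G4: `L_{j+1}ᵀ ⊕ E_k(μ) ⇝ L_jᵀ ⊕ E_{k+1}(μ)`, `μ ∈ ℂ ∪ {∞}`
  (∃ (j k : ℕ) (μ : Option ℂ) (rest : Multiset KBlock),
      s = KBlock.LT (j + 1) ::ₘ Eb μ k ::ₘ rest ∧
      t = KBlock.LT j ::ₘ Eb μ (k + 1) ::ₘ rest) ∨
  -- G5: `E_{j-1}(μ) ⊕ E_{k+1}(μ) ⇝ E_j(μ) ⊕ E_k(μ)`, `1 ≤ j ≤ k`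
  (∃ (j k : ℕ) (μ : Option ℂ) (rest : Multiset KBlock), 1 ≤ j ∧ j ≤ k ∧
      s = Eb μ (j - 1) ::ₘ Eb μ (k + 1) ::ₘ rest ∧
      t = Eb μ j ::ₘ Eb μ k ::ₘ rest) ∨
  -- G6: `⊕ᵢ E_{kᵢ}(μᵢ) ⇝ L_p ⊕ L_qᵀ`, `p + q + 1 = Σ kᵢ`, `μᵢ` pairwise distinct
  (∃ (ek : List (Option ℂ × ℕ)) (p q : ℕ) (rest : Multiset KBlock),
      (ek.map Prod.fst).Nodup ∧
      p + q + 1 = (ek.map Prod.snd).sum ∧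
      s = ↑(ek.map fun x => Eb x.1 x.2) + rest ∧
      t = KBlock.L p ::ₘ KBlock.LT q ::ₘ rest)

/-! ### Majorization of multisets of natural numbers -/

/-- Sum of the truncated differences `i - p` over the elements `p` of `a`. -/
def capSum (a : Multiset ℕ) (i : ℕ) : ℕ := (a.map fun p => i - p).sum

/-- Sum of `min i p` over the elements `p` of `a`. -/
def minSum (a : Multiset ℕ) (i : ℕ) : ℕ := (a.map fun p => min i p).sum

/-- Number of elements of `a` that are at most `i`. -/
def countLE (a : Multiset ℕ) (i : ℕ) : ℕ := (a.map fun p => if p ≤ i then 1 else 0).sum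

@[simp] theorem capSum_zero (i : ℕ) : capSum 0 i = 0 := rfl

@[simp] theorem minSum_zero (i : ℕ) : minSum 0 i = 0 := rfl

@[simp] theorem capSum_cons (p : ℕ) (a : Multiset ℕ) (i : ℕ) :
    capSum (p ::ₘ a) i = (i - p) + capSum a i := by simp [capSum]

@[simp] theorem minSum_cons (p : ℕ) (a : Multiset ℕ) (i : ℕ) :
    minSum (p ::ₘ a) i = min i p + minSum a i := by simp [minSum]

@[simp] theorem countLE_cons (p : ℕ) (a : Multiset ℕ) (i : ℕ) :
    countLE (p ::ₘ a) i = (if p ≤ i then 1 else 0) + countLE a i := by simp [countLE]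

theorem capSum_at_zero (a : Multiset ℕ) : capSum a 0 = 0 := by
  induction a using Multiset.induction_on with
  | empty => simp
  | cons p a ih => simp [ih]

theorem minSum_add_capSum (a : Multiset ℕ) (i : ℕ) :
    minSum a i + capSum a i = a.card * i := by
  induction a using Multiset.induction_on with
  | empty => simp
  | cons p a ih =>
    simp only [minSum_cons, capSum_cons, Multiset.card_cons, add_mul, one_mul]
    omega

theorem card_mul_le_capSum_add_sum (a : Multiset ℕ) (i : ℕ) :
    a.card * i ≤ capSum a i + a.sum := by
  induction a using Multiset.induction_on with
  | empty => simp
  | cons p a ih =>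
    simp only [capSum_cons, Multiset.card_cons, add_mul, one_mul, Multiset.sum_cons]
    omega

theorem capSum_add_sum_of_le (a : Multiset ℕ) (i : ℕ) (h : ∀ p ∈ a, p ≤ i) :
    capSum a i + a.sum = a.card * i := by
  induction a using Multiset.induction_on with
  | empty => simp
  | cons p a ih =>
    have h1 := ih fun q hq => h q (Multiset.mem_cons_of_mem hq)
    have h2 := h p (Multiset.mem_cons_self p a)
    simp only [capSum_cons, Multiset.card_cons, add_mul, one_mul, Multiset.sum_cons]
    omega

theorem capSum_add_sum_of_sum_le (a : Multiset ℕ) (i : ℕ) (h : a.sum ≤ i) :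
    capSum a i + a.sum = a.card * i :=
  capSum_add_sum_of_le a i fun _ hp => (Multiset.single_le_sum (by simp) _ hp).trans h

theorem minSum_le_sum (a : Multiset ℕ) (i : ℕ) : minSum a i ≤ a.sum := by
  induction a using Multiset.induction_on with
  | empty => simp
  | cons p a ih => simp only [minSum_cons, Multiset.sum_cons]; omega

theorem minSum_of_le (a : Multiset ℕ) (i : ℕ) (h : ∀ p ∈ a, p ≤ i) : minSum a i = a.sum := by
  have h1 := capSum_add_sum_of_le a i h
  have h2 := minSum_add_capSum a i
  omega

theorem minSum_mono (a : Multiset ℕ) {i j : ℕ} (h : i ≤ j) : minSum a i ≤ minSum a j := by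
  induction a using Multiset.induction_on with
  | empty => simp
  | cons p a ih => simp only [minSum_cons]; omega

theorem sum_le_minSum_of_minSum_le (a : Multiset ℕ) {i j : ℕ} (h : i < j)
    (hle : minSum a j ≤ minSum a i) : a.sum ≤ minSum a i := by
  induction a using Multiset.induction_on with
  | empty => simp
  | cons p a ih =>
    have := minSum_mono a h.le
    simp only [minSum_cons, Multiset.sum_cons] at *
    have := ih (by omega)
    omega

theorem capSum_succ (a : Multiset ℕ) (i : ℕ) : capSum a (i + 1) = capSum a i + countLE a i := by
  induction a using Multiset.induction_on with
  | empty => simp [countLE]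
  | cons p a ih =>
    simp only [capSum_cons, countLE_cons]
    split_ifs <;> omega

theorem countLE_mono (a : Multiset ℕ) {i j : ℕ} (h : i ≤ j) : countLE a i ≤ countLE a j := by
  induction a using Multiset.induction_on with
  | empty => simp [countLE]
  | cons p a ih =>
    simp only [countLE_cons]
    split_ifs <;> omega

theorem countLE_succ (a : Multiset ℕ) (i : ℕ) :
    countLE a (i + 1) = countLE a i + a.count (i + 1) := by
  induction a using Multiset.induction_on with
  | empty => simp [countLE]
  | cons p a ih =>
    simp only [countLE_cons, Multiset.count_cons]
    split_ifs <;> omega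

theorem countLE_zero (a : Multiset ℕ) : countLE a 0 = a.count 0 := by
  induction a using Multiset.induction_on with
  | empty => simp [countLE]
  | cons p a ih =>
    simp only [countLE_cons, Multiset.count_cons]
    split_ifs <;> omega

theorem eq_of_capSum_eq {a b : Multiset ℕ} (h : ∀ i, capSum a i = capSum b i) : a = b := by
  have hc : ∀ i, countLE a i = countLE b i := fun i => by
    have h1 := capSum_succ a i
    have h2 := capSum_succ b i
    have := h i
    have := h (i + 1)
    omega
  ext i
  cases i with
  | zero => rw [← countLE_zero, ← countLE_zero, hc]
  | succ i =>
    have h1 := countLE_succ a i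
    have h2 := countLE_succ b i
    have := hc i
    have := hc (i + 1)
    omega

theorem exists_cons_cons_of_countLE (a : Multiset ℕ) {u v : ℕ}
    (h : countLE a u + 2 ≤ countLE a v) :
    ∃ j k r, u < j ∧ j ≤ k ∧ k ≤ v ∧ a = j ::ₘ k ::ₘ r := by
  have key : ∀ (a : Multiset ℕ), countLE a u + 1 ≤ countLE a v →
      ∃ j r, u < j ∧ j ≤ v ∧ a = j ::ₘ r := by
    intro a ha
    by_contra hcon
    push Not at hcon
    have : ∀ p ∈ a, u < p → v < p := fun p hp hup => by
      by_contra hv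
      obtain ⟨r, rfl⟩ := Multiset.exists_cons_of_mem hp
      exact hcon p r hup (by omega) rfl
    have hle : countLE a v ≤ countLE a u := by
      apply Multiset.sum_map_le_sum_map
      intro p hp
      have := this p hp
      split_ifs <;> omega
    omega
  obtain ⟨j, r, hj, hj', rfl⟩ := key a (by omega)
  simp only [countLE_cons] at h
  obtain ⟨k, r', hk, hk', rfl⟩ := key r (by split_ifs at h <;> omega)
  rcases le_total j k with hjk | hjk
  · exact ⟨j, k, r', hj, hjk, hk', rfl⟩
  · exact ⟨k, j, r', hk, hjk, hj', Multiset.cons_swap _ _ _⟩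

/-- Elementary spreading move: a pair `j ≤ k` of elements is replaced by `j - 1`, `k + 1`. -/
def Spread (a b : Multiset ℕ) : Prop :=
  ∃ (j k : ℕ) (r : Multiset ℕ), 1 ≤ j ∧ j ≤ k ∧ a = j ::ₘ k ::ₘ r ∧ b = (j - 1) ::ₘ (k + 1) ::ₘ r

theorem exists_spread_of_capSum_lt {a b : Multiset ℕ} (hcard : a.card = b.card)
    (hsum : a.sum = b.sum) (hle : ∀ i, capSum a i ≤ capSum b i) (hne : a ≠ b) :
    ∃ a', Spread a a' ∧ a'.card = b.card ∧ a'.sum = b.sum ∧ (∀ i, capSum a' i ≤ capSum b i) ∧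
      (∀ i, capSum a i ≤ capSum a' i) ∧ ∃ i < b.sum, capSum a i < capSum a' i := by
  obtain ⟨i₀, hi₀⟩ : ∃ i, capSum a i < capSum b i := by
    by_contra hcon
    push Not at hcon
    exact hne (eq_of_capSum_eq fun i => le_antisymm (hle i) (hcon i))
  have hlarge : ∀ i, b.sum ≤ i → capSum a i = capSum b i := fun i hi => by
    have h1 := capSum_add_sum_of_sum_le a i (hsum ▸ hi)
    have h2 := capSum_add_sum_of_sum_le b i hi
    rw [hcard] at h1
    omega
  have hex : ∃ i, i₀ ≤ i ∧ capSum a i = capSum b i :=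
    ⟨max i₀ b.sum, le_max_left _ _, hlarge _ (le_max_right _ _)⟩
  classical
  set v := Nat.find hex with hv
  obtain ⟨hv1, hv2⟩ := Nat.find_spec hex
  have hvmin : ∀ i, i₀ ≤ i → i < v → capSum a i < capSum b i := fun i h1 h2 =>
    lt_of_le_of_ne (hle i) fun h3 => Nat.find_min hex h2 ⟨h1, h3⟩
  set u := Nat.findGreatest (fun i => capSum a i = capSum b i) i₀ with hu
  have hu1 : capSum a u = capSum b u :=
    Nat.findGreatest_spec (P := fun i => capSum a i = capSum b i) (Nat.zero_le i₀)
      (by simp [capSum_at_zero])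
  have hu2 : u ≤ i₀ := Nat.findGreatest_le i₀
  have humax : ∀ i, u < i → i ≤ i₀ → capSum a i < capSum b i := fun i h1 h2 =>
    lt_of_le_of_ne (hle i) fun h3 =>
      Nat.findGreatest_is_greatest (P := fun i => capSum a i = capSum b i) h1 h2 h3
  have hstrict : ∀ i, u < i → i < v → capSum a i < capSum b i := fun i h1 h2 => by
    rcases le_total i i₀ with h | h
    · exact humax i h1 h
    · exact hvmin i h h2
  have hu3 : u ≠ i₀ := fun h => by rw [h] at hu1; omega
  have hv3 : v ≠ i₀ := fun h => by
    have : capSum a v = capSum b v := hv2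
    rw [h] at this; omega
  have hv1' : i₀ ≤ v := hv1
  obtain ⟨w, hw⟩ : ∃ w, v = w + 1 := ⟨v - 1, by omega⟩
  have e1 := capSum_succ a u
  have e2 := capSum_succ b u
  have e3 := capSum_succ a w
  have e4 := capSum_succ b w
  have s1 := hstrict (u + 1) (by omega) (by omega)
  have s2 := hstrict w (by omega) (by omega)
  have e5 : capSum a (w + 1) = capSum b (w + 1) := hw ▸ hv2
  have e6 := countLE_mono b (show u ≤ w by omega)
  obtain ⟨j, k, r, hj, hjk, hk, rfl⟩ := exists_cons_cons_of_countLE a (u := u) (v := w) (by omega)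
  refine ⟨(j - 1) ::ₘ (k + 1) ::ₘ r, ⟨j, k, r, by omega, hjk, rfl, rfl⟩, ?_, ?_, ?_, ?_, j, ?_, ?_⟩
  · rw [← hcard]; simp
  · rw [← hsum]; simp only [Multiset.sum_cons]; omega
  · intro i
    have h1 := hle i
    have h2 := hstrict i
    simp only [capSum_cons] at h1 h2 ⊢
    omega
  · intro i
    simp only [capSum_cons]
    omega
  · by_contra hcon
    have h1 := hlarge j (by omega)
    have h2 := hstrict j (by omega) (by omega)
    omega
  · simp only [capSum_cons]
    omega

theorem reflTransGen_spread {a b : Multiset ℕ} (hcard : a.card = b.card)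
    (hsum : a.sum = b.sum) (hle : ∀ i, capSum a i ≤ capSum b i) :
    Relation.ReflTransGen Spread a b := by
  induction hN : ∑ i ∈ Finset.range b.sum, (capSum b i - capSum a i) using Nat.strong_induction_on
    generalizing a with
  | _ N ih =>
    by_cases hab : a = b
    · rw [hab]
    · obtain ⟨a', h1, h2, h3, h4, h5, i, hi, hi'⟩ := exists_spread_of_capSum_lt hcard hsum hle hab
      refine .head h1 (ih _ ?_ h2 h3 h4 rfl)
      rw [← hN]
      refine Finset.sum_lt_sum (fun i _ => ?_) ⟨i, Finset.mem_range.2 hi, ?_⟩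
      · have := h5 i
        omega
      · have := h4 i
        omega

/-! ### Structure transitions up to blocks of size zero -/

/-- The block `L_k` (for `true`) or `L_kᵀ` (for `false`). -/
def Lb : Bool → ℕ → KBlock
  | true, k => KBlock.L k
  | false, k => KBlock.LT k

/-- All members of `z` are empty blocks `E_0(μ)`. -/
def IsZeroBlocks (z : Multiset KBlock) : Prop := ∀ b ∈ z, ∃ μ, b = Eb μ 0

theorem IsZeroBlocks.add {z w : Multiset KBlock} (hz : IsZeroBlocks z) (hw : IsZeroBlocks w) :
    IsZeroBlocks (z + w) := fun b hb => (Multiset.mem_add.1 hb).elim (hz b) (hw b)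

theorem IsZeroBlocks.zero : IsZeroBlocks 0 := fun _ hb => by simp at hb

theorem TransG.add_right {s t : Multiset KBlock} (h : TransG s t) (r : Multiset KBlock) :
    TransG (s + r) (t + r) := by
  rcases h with ⟨j, k, q, h1, h2, rfl, rfl⟩ | ⟨j, k, q, h1, h2, rfl, rfl⟩ | ⟨j, k, μ, q, rfl, rfl⟩ |
    ⟨j, k, μ, q, rfl, rfl⟩ | ⟨j, k, μ, q, h1, h2, rfl, rfl⟩ | ⟨ek, p, p', q, h1, h2, rfl, rfl⟩
  · exact .inl ⟨j, k, q + r, h1, h2, by simp, by simp⟩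
  · exact .inr <| .inl ⟨j, k, q + r, h1, h2, by simp, by simp⟩
  · exact .inr <| .inr <| .inl ⟨j, k, μ, q + r, by simp, by simp⟩
  · exact .inr <| .inr <| .inr <| .inl ⟨j, k, μ, q + r, by simp, by simp⟩
  · exact .inr <| .inr <| .inr <| .inr <| .inl ⟨j, k, μ, q + r, h1, h2, by simp, by simp⟩
  · exact .inr <| .inr <| .inr <| .inr <| .inr ⟨ek, p, p', q + r, h1, h2, by rw [add_assoc], by simp⟩

theorem reflTransGen_transG_add_right {s t : Multiset KBlock}
    (h : Relation.ReflTransGen TransG s t) (r : Multiset KBlock) :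
    Relation.ReflTransGen TransG (s + r) (t + r) :=
  h.lift (· + r) fun _ _ h => TransG.add_right h r

/-- `t` is obtained from `s` by structure transitions, up to adding empty blocks. -/
def Degen (s t : Multiset KBlock) : Prop :=
  ∃ z w, IsZeroBlocks z ∧ IsZeroBlocks w ∧ Relation.ReflTransGen TransG (s + z) (t + w)

theorem TransG.degen {s t : Multiset KBlock} (h : TransG s t) : Degen s t :=
  ⟨0, 0, .zero, .zero, by simpa using .single h⟩

theorem Degen.refl (s : Multiset KBlock) : Degen s s := ⟨0, 0, .zero, .zero, .refl⟩

theorem Degen.trans {s t u : Multiset KBlock} (h : Degen s t) (h' : Degen t u) : Degen s u := by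
  obtain ⟨z, w, hz, hw, hst⟩ := h
  obtain ⟨z', w', hz', hw', htu⟩ := h'
  refine ⟨z + z', w' + w, hz.add hz', hw'.add hw, ?_⟩
  have h1 := reflTransGen_transG_add_right hst z'
  have h2 := reflTransGen_transG_add_right htu w
  rw [add_right_comm] at h2
  rw [← add_assoc, ← add_assoc]
  exact h1.trans h2

theorem Degen.add_right {s t : Multiset KBlock} (h : Degen s t) (r : Multiset KBlock) :
    Degen (s + r) (t + r) := by
  obtain ⟨z, w, hz, hw, hst⟩ := h
  refine ⟨z, w, hz, hw, ?_⟩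
  rw [add_right_comm s, add_right_comm t]
  exact reflTransGen_transG_add_right hst r

theorem Degen.add {s t s' t' : Multiset KBlock} (h : Degen s t) (h' : Degen s' t') :
    Degen (s + s') (t + t') := by
  refine (h.add_right s').trans ?_
  rw [add_comm t, add_comm t]
  exact h'.add_right t

theorem IsZeroBlocks.degen_add {z : Multiset KBlock} (hz : IsZeroBlocks z) (s : Multiset KBlock) :
    Degen s (s + z) := ⟨z, 0, hz, .zero, by simpa using .refl⟩

theorem IsZeroBlocks.add_degen {z : Multiset KBlock} (hz : IsZeroBlocks z) (s : Multiset KBlock) :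
    Degen (s + z) s := ⟨0, z, .zero, hz, by simpa using .refl⟩

theorem Degen.sum {ι : Type*} (F : Finset ι) {f g : ι → Multiset KBlock}
    (h : ∀ i ∈ F, Degen (f i) (g i)) : Degen (∑ i ∈ F, f i) (∑ i ∈ F, g i) := by
  classical
  induction F using Finset.induction_on with
  | empty => exact .refl _
  | insert a F ha ih =>
    rw [Finset.sum_insert ha, Finset.sum_insert ha]
    exact (h a (Finset.mem_insert_self a F)).add
      (ih fun i hi => h i (Finset.mem_insert_of_mem hi))

theorem Spread.transG_Lb {a b : Multiset ℕ} (h : Spread a b) (x : Bool) :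
    TransG (a.map (Lb x)) (b.map (Lb x)) := by
  obtain ⟨j, k, r, h1, h2, rfl, rfl⟩ := h
  cases x
  · exact .inr <| .inl ⟨j, k, r.map (Lb false), h1, h2, by simp [Lb], by simp [Lb]⟩
  · exact .inl ⟨j, k, r.map (Lb true), h1, h2, by simp [Lb], by simp [Lb]⟩

theorem Spread.transG_Eb {a b : Multiset ℕ} (h : Spread a b) (μ : Option ℂ) :
    TransG (b.map (Eb μ)) (a.map (Eb μ)) := by
  obtain ⟨j, k, r, h1, h2, rfl, rfl⟩ := h
  exact .inr <| .inr <| .inr <| .inr <| .inl ⟨j, k, μ, r.map (Eb μ), h1, h2, by simp, by simp⟩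

theorem degen_of_reflTransGen {s t : Multiset KBlock} (h : Relation.ReflTransGen TransG s t) :
    Degen s t := ⟨0, 0, .zero, .zero, by simpa using h⟩

theorem degen_map_Lb {a b : Multiset ℕ} (x : Bool) (hcard : a.card = b.card)
    (hsum : a.sum = b.sum) (hle : ∀ i, capSum a i ≤ capSum b i) :
    Degen (a.map (Lb x)) (b.map (Lb x)) :=
  degen_of_reflTransGen <| (reflTransGen_spread hcard hsum hle).lift (Multiset.map (Lb x))
    fun _ _ h => Spread.transG_Lb h x

theorem isZeroBlocks_map_replicate (μ : Option ℂ) (n : ℕ) :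
    IsZeroBlocks ((Multiset.replicate n 0).map (Eb μ)) := fun b hb => by
  rw [Multiset.map_replicate] at hb
  exact ⟨μ, Multiset.eq_of_mem_replicate hb⟩

theorem degen_map_Eb {a b : Multiset ℕ} (μ : Option ℂ)
    (hsum : a.sum = b.sum) (hle : ∀ i, minSum a i ≤ minSum b i) :
    Degen (a.map (Eb μ)) (b.map (Eb μ)) := by
  set a' := a + Multiset.replicate b.card 0 with ha'
  set b' := b + Multiset.replicate a.card 0 with hb'
  have hcard : b'.card = a'.card := by simp [ha', hb', add_comm]
  have hpad : ∀ (c : Multiset ℕ) (n i : ℕ), minSum (c + Multiset.replicate n 0) i = minSum c i := by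
    intro c n i
    simp [minSum]
  have h1 : Relation.ReflTransGen Spread b' a' := by
    refine reflTransGen_spread hcard (by simp [ha', hb', hsum]) fun i => ?_
    have e1 := minSum_add_capSum a' i
    have e2 := minSum_add_capSum b' i
    rw [hpad] at e1 e2
    rw [hcard] at e2
    have := hle i
    omega
  have h2 : Degen (a'.map (Eb μ)) (b'.map (Eb μ)) := by
    refine degen_of_reflTransGen ?_
    have h3 : Relation.ReflTransGen (Function.swap Spread) a' b' := h1.swap
    exact h3.lift (Multiset.map (Eb μ)) fun _ _ h => Spread.transG_Eb h μ
  rw [ha', hb', Multiset.map_add, Multiset.map_add] at h2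
  exact ((isZeroBlocks_map_replicate μ _).degen_add _).trans
    (h2.trans ((isZeroBlocks_map_replicate μ _).add_degen _))

/-! ### Assembling canonical forms from their numerical data -/

/-- The collection of blocks `L_p` (`p ∈ x true`), `L_qᵀ` (`q ∈ x false`) and `E_k(μ)`
(`μ ∈ F`, `k ∈ e μ`). -/
def assemble (F : Finset (Option ℂ)) (x : Bool → Multiset ℕ) (e : Option ℂ → Multiset ℕ) :
    Multiset KBlock :=
  (x true).map (Lb true) + (x false).map (Lb false) + ∑ μ ∈ F, (e μ).map (Eb μ)

open Classical in
theorem exists_assemble_update (F : Finset (Option ℂ)) (x : Bool → Multiset ℕ)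
    (e : Option ℂ → Multiset ℕ) (b : Bool) {μ : Option ℂ} (hμ : μ ∈ F) :
    ∃ rest, ∀ a c, assemble F (Function.update x b a) (Function.update e μ c) =
      a.map (Lb b) + c.map (Eb μ) + rest := by
  refine ⟨(x (!b)).map (Lb (!b)) + ∑ ν ∈ F \ {μ}, (e ν).map (Eb ν), fun a c => ?_⟩
  have h : ∑ ν ∈ F, (Function.update e μ c ν).map (Eb ν) =
      c.map (Eb μ) + ∑ ν ∈ F \ {μ}, (e ν).map (Eb ν) := by
    rw [← Finset.sum_sdiff (Finset.singleton_subset_iff.2 hμ), add_comm]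
    simp only [Finset.sum_singleton, Function.update_self]
    congr 1
    refine Finset.sum_congr rfl fun ν hν => ?_
    rw [Function.update_of_ne (by simpa using (Finset.mem_sdiff.1 hν).2)]
  rw [assemble, h]
  cases b <;> simp <;> abel

/-- The numerical inequalities between two canonical forms that are necessary for the second one
to lie in the orbit closure of the first one. -/
structure Dominates (F : Finset (Option ℂ)) (x : Bool → Multiset ℕ) (e : Option ℂ → Multiset ℕ)
    (y : Bool → Multiset ℕ) (d : Option ℂ → Multiset ℕ) : Prop where
  capSum_le : ∀ b i, capSum (x b) i ≤ capSum (y b) i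
  minSum_le : ∀ μ ∈ F, ∀ k, minSum (e μ) k + k * (x true).card ≤ minSum (d μ) k + k * (y true).card
  card_eq : (x true).card + (y false).card = (y true).card + (x false).card
  size_eq : (x true).sum + (x false).sum + ∑ μ ∈ F, (e μ).sum + (x true).card =
    (y true).sum + (y false).sum + ∑ μ ∈ F, (d μ).sum + (y true).card

open Classical in
theorem sum_update_sum {F : Finset (Option ℂ)} {μ : Option ℂ} (hμ : μ ∈ F)
    (e : Option ℂ → Multiset ℕ) (c : Multiset ℕ) :
    ∑ ν ∈ F, (Function.update e μ c ν).sum + (e μ).sum = c.sum + ∑ ν ∈ F, (e ν).sum := by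
  rw [← Finset.add_sum_erase F _ hμ, ← Finset.add_sum_erase F (fun ν => (e ν).sum) hμ]
  have : ∑ ν ∈ F.erase μ, (Function.update e μ c ν).sum = ∑ ν ∈ F.erase μ, (e ν).sum :=
    Finset.sum_congr rfl fun ν hν => by rw [Function.update_of_ne (Finset.ne_of_mem_erase hν)]
  rw [this, Function.update_self]
  omega

/-- Moving one unit from a largest singular block to a regular block. -/
theorem Dominates.exists_degen_of_enlarge {F : Finset (Option ℂ)} {x y : Bool → Multiset ℕ}
    {e d : Option ℂ → Multiset ℕ} (h : Dominates F x e y d) {b : Bool} {M : ℕ}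
    (hM : M ∈ x b) (hM1 : 1 ≤ M) (hlt : ∀ i, M ≤ i → capSum (x b) i < capSum (y b) i)
    {μ : Option ℂ} (hμ : μ ∈ F) {l : ℕ} {q : Multiset ℕ}
    (hl : e μ = l ::ₘ q ∨ (l = 0 ∧ e μ = q))
    (hlow : ∀ k, l < k → minSum (e μ) k + k * (x true).card < minSum (d μ) k + k * (y true).card) :
    ∃ x' e', Degen (assemble F x e) (assemble F x' e') ∧ Dominates F x' e' y d ∧
      (x' true).card = (x true).card ∧
      (x' true).sum + (x' false).sum < (x true).sum + (x false).sum := by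
  classical
  obtain ⟨r, hr⟩ := Multiset.exists_cons_of_mem hM
  obtain ⟨M, rfl⟩ : ∃ N, M = N + 1 := ⟨M - 1, by omega⟩
  obtain ⟨rest, hrest⟩ := exists_assemble_update F x e b hμ
  set x' := Function.update x b (M ::ₘ r) with hx'
  set e' := Function.update e μ ((l + 1) ::ₘ q) with he'
  have hcard : ∀ b', (x' b').card = (x b').card := by
    intro b'
    by_cases hb : b' = b
    · subst hb; simp [hx', hr]
    · simp [hx', hb]
  have hsum : (x' true).sum + (x' false).sum + 1 = (x true).sum + (x false).sum := by
    cases b <;> simp [hx', hr] <;> omega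
  have hesum : (e μ).sum = l + q.sum := by
    rcases hl with hl | ⟨rfl, hl⟩ <;> simp [hl]
  have hemin : ∀ k, minSum (e μ) k = min k l + minSum q k := by
    rcases hl with hl | ⟨rfl, hl⟩ <;> simp [hl]
  refine ⟨x', e', ?_, ⟨?_, ?_, ?_, ?_⟩, hcard true, by omega⟩
  · have h1 : Degen (assemble F x e) (assemble F x (Function.update e μ (l ::ₘ q))) := by
      rcases hl with hl | ⟨rfl, hl⟩
      · rw [← hl, Function.update_eq_self]
        exact .refl _
      · have e1 := hrest (x b) (e μ)
        have e2 := hrest (x b) (0 ::ₘ q)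
        rw [Function.update_eq_self, Function.update_eq_self] at e1
        rw [Function.update_eq_self] at e2
        rw [e1, e2, hl, Multiset.map_cons]
        have : (x b).map (Lb b) + Eb μ 0 ::ₘ q.map (Eb μ) + rest =
            (x b).map (Lb b) + q.map (Eb μ) + rest + {Eb μ 0} := by
          rw [← Multiset.singleton_add]; abel
        rw [this]
        exact IsZeroBlocks.degen_add (fun c hc => ⟨μ, Multiset.mem_singleton.1 hc⟩) _
    refine h1.trans (TransG.degen ?_)
    have e1 := hrest (x b) (l ::ₘ q)
    rw [Function.update_eq_self] at e1
    rw [e1, hx', he', hrest, hr]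
    simp only [Multiset.map_cons, Multiset.cons_add, Multiset.add_cons]
    cases b
    · refine .inr <| .inr <| .inr <| .inl ⟨M, l, μ, r.map (Lb false) + q.map (Eb μ) + rest, ?_, ?_⟩ <;>
        simp [Lb, Multiset.cons_swap]
    · refine .inr <| .inr <| .inl ⟨M, l, μ, r.map (Lb true) + q.map (Eb μ) + rest, ?_, ?_⟩ <;>
        simp [Lb, Multiset.cons_swap]
  · intro b' i
    by_cases hb : b' = b
    · subst hb
      have h1 := h.capSum_le b' i
      have h2 := hlt i
      rw [hr] at h1 h2
      simp only [hx', Function.update_self, capSum_cons] at h1 h2 ⊢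
      omega
    · rw [hx', Function.update_of_ne hb]
      exact h.capSum_le b' i
  · intro ν hν k
    rw [hcard]
    by_cases hb : ν = μ
    · subst hb
      have h1 := h.minSum_le ν hν k
      have h2 := hlow k
      rw [hemin] at h1 h2
      simp only [he', Function.update_self, minSum_cons]
      omega
    · rw [he', Function.update_of_ne hb]
      exact h.minSum_le ν hν k
  · rw [hcard, hcard]
    exact h.card_eq
  · have h1 := h.size_eq
    have h2 := sum_update_sum hμ e ((l + 1) ::ₘ q)
    rw [hesum, Multiset.sum_cons, ← he'] at h2
    rw [hcard]
    omega

theorem countLE_le_card (a : Multiset ℕ) (i : ℕ) : countLE a i ≤ a.card := by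
  induction a using Multiset.induction_on with
  | empty => simp [countLE]
  | cons p a ih =>
    simp only [countLE_cons, Multiset.card_cons]
    split_ifs <;> omega

theorem Multiset.exists_upper_bound_mem_or_zero (a : Multiset ℕ) :
    ∃ M, (∀ p ∈ a, p ≤ M) ∧ (M = 0 ∨ M ∈ a) := by
  induction a using Multiset.induction_on with
  | empty => exact ⟨0, by simp, .inl rfl⟩
  | cons p a ih =>
    obtain ⟨M, h1, h2⟩ := ih
    rcases le_total p M with h | h
    · refine ⟨M, fun q hq => ?_, h2.imp_right Multiset.mem_cons_of_mem⟩
      rcases Multiset.mem_cons.1 hq with rfl | hq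
      exacts [h, h1 q hq]
    · refine ⟨p, fun q hq => ?_, .inr (Multiset.mem_cons_self p a)⟩
      rcases Multiset.mem_cons.1 hq with rfl | hq
      exacts [le_rfl, (h1 q hq).trans h]

/-- If `b` has more elements than `a` and dominates it, then either a largest element of `a` may
be decreased, or a new element can be added to `a`. -/
theorem exists_decrease_or_insert {a b : Multiset ℕ} (hcard : a.card < b.card)
    (hle : ∀ i, capSum a i ≤ capSum b i) :
    (∃ M ∈ a, 1 ≤ M ∧ ∀ i, M ≤ i → capSum a i < capSum b i) ∨
    ∃ u, (∀ i, capSum a i + (i - u) ≤ capSum b i) ∧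
      b.card * u + a.sum ≤ a.card * u + b.sum := by
  obtain ⟨M, hM, hM'⟩ := a.exists_upper_bound_mem_or_zero
  by_cases hex : ∃ i, M ≤ i ∧ capSum a i = capSum b i
  · right
    have hbd : ∀ i, M ≤ i → capSum a i = capSum b i → i ≤ b.sum := fun i hi heq => by
      have h1 := card_mul_le_capSum_add_sum b i
      have h2 := capSum_add_sum_of_le a i fun p hp => (hM p hp).trans hi
      have h3 : (a.card + 1) * i ≤ b.card * i := Nat.mul_le_mul_right i hcard
      rw [add_mul, one_mul] at h3
      omega
    classical
    obtain ⟨i₀, hi₀⟩ := hex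
    set P : ℕ → Prop := fun i => M ≤ i ∧ capSum a i = capSum b i with hP
    obtain ⟨hu1, hu2⟩ : P (Nat.findGreatest P b.sum) :=
      Nat.findGreatest_spec (hbd i₀ hi₀.1 hi₀.2) hi₀
    have hmax : ∀ i, Nat.findGreatest P b.sum < i → capSum a i ≠ capSum b i := fun i hi heq => by
      have hMi : M ≤ i := by omega
      exact Nat.findGreatest_is_greatest hi (hbd i hMi heq) ⟨hMi, heq⟩
    generalize Nat.findGreatest P b.sum = u at hu1 hu2 hmax
    have hcu : a.card < countLE b u := by
      have h1 := capSum_add_sum_of_le a u fun p hp => (hM p hp).trans hu1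
      have h2 := capSum_add_sum_of_le a (u + 1) fun p hp => (hM p hp).trans (by omega)
      have h3 := capSum_succ b u
      have h4 := hmax (u + 1) (by omega)
      have h5 := hle (u + 1)
      rw [mul_add, mul_one] at h2
      omega
    refine ⟨u, fun i => ?_, ?_⟩
    · rcases le_total i u with h | h
      · have := hle i
        omega
      · obtain ⟨n, rfl⟩ := Nat.exists_eq_add_of_le h
        induction n with
        | zero => have := hle u; simpa using this
        | succ n ih =>
          have h1 := capSum_succ a (u + n)
          have h2 := capSum_succ b (u + n)
          have h3 := countLE_le_card a (u + n)
          have h4 := countLE_mono b (show u ≤ u + n by omega)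
          have h5 := ih (by omega)
          rw [← add_assoc]
          omega
    · have h1 := card_mul_le_capSum_add_sum b u
      have h2 := capSum_add_sum_of_le a u fun p hp => (hM p hp).trans hu1
      omega
  · left
    push Not at hex
    have hM0 : M ≠ 0 := fun h => hex 0 (by omega) (by simp [capSum_at_zero])
    exact ⟨M, hM'.resolve_left hM0, by omega, fun i hi => lt_of_le_of_ne (hle i) (hex i hi)⟩

theorem exists_eq_cons_max (a : Multiset ℕ) :
    ∃ l q, 0 ::ₘ a = l ::ₘ q ∧ ∀ p ∈ 0 ::ₘ a, p ≤ l := by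
  obtain ⟨M, h1, h2⟩ := (0 ::ₘ a).exists_upper_bound_mem_or_zero
  have : M ∈ 0 ::ₘ a := h2.elim (fun h => h ▸ Multiset.mem_cons_self 0 a) id
  obtain ⟨q, hq⟩ := Multiset.exists_cons_of_mem this
  exact ⟨M, q, hq, h1⟩

theorem minSum_tail_le {q d : Multiset ℕ} {l N N' k : ℕ} (hq : ∀ p ∈ l ::ₘ q, p ≤ l)
    (hN : N < N') (h : ∀ k, minSum (l ::ₘ q) k + k * N ≤ minSum d k + k * N') :
    minSum q k + k * (N + 1) ≤ minSum d k + k * N' := by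
  obtain ⟨c, rfl⟩ := Nat.exists_eq_add_of_lt hN
  rcases le_total k l with hk | hk
  · have h1 := h k
    rw [minSum_cons, min_eq_left hk] at h1
    linarith
  · have h1 := h l
    rw [minSum_of_le _ _ hq, Multiset.sum_cons] at h1
    have h2 := minSum_le_sum q k
    have h3 := minSum_mono d hk
    have h4 : l * c ≤ k * c := Nat.mul_le_mul_right c hk
    linarith

/-- Merging largest blocks of all eigenvalues into a pair of singular blocks. -/
theorem Dominates.exists_degen_of_merge {F : Finset (Option ℂ)} {x y : Bool → Multiset ℕ}
    {e d : Option ℂ → Multiset ℕ} (h : Dominates F x e y d)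
    (hlt : (x true).card < (y true).card) {u v : ℕ}
    (hu : ∀ i, capSum (x true) i + (i - u) ≤ capSum (y true) i)
    (hu' : (y true).card * u + (x true).sum ≤ (x true).card * u + (y true).sum)
    (hv : ∀ i, capSum (x false) i + (i - v) ≤ capSum (y false) i)
    (hv' : (y false).card * v + (x false).sum ≤ (x false).card * v + (y false).sum) :
    ∃ x' e', Degen (assemble F x e) (assemble F x' e') ∧ Dominates F x' e' y d ∧
      (x' true).card = (x true).card + 1 := by
  choose l q hlq hl using fun μ => exists_eq_cons_max (e μ)
  obtain ⟨c, hc⟩ := Nat.exists_eq_add_of_lt hlt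
  have hc' : (y false).card = (x false).card + c + 1 := by
    have := h.card_eq
    omega
  have hmin : ∀ μ ∈ F, ∀ k, minSum (l μ ::ₘ q μ) k + k * (x true).card ≤
      minSum (d μ) k + k * (y true).card := fun μ hμ k => by
    rw [← hlq]
    simpa using h.minSum_le μ hμ k
  have hsum : ∀ μ, (e μ).sum = l μ + (q μ).sum := fun μ => by
    rw [← Multiset.sum_cons, ← hlq]
    simp
  have hesum : ∑ μ ∈ F, (e μ).sum = ∑ μ ∈ F, l μ + ∑ μ ∈ F, (q μ).sum := by
    rw [← Finset.sum_add_distrib]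
    exact Finset.sum_congr rfl fun μ _ => hsum μ
  have hreg : ∑ μ ∈ F, (e μ).sum ≤ ∑ μ ∈ F, (d μ).sum + (c + 1) * ∑ μ ∈ F, l μ := by
    rw [Finset.mul_sum, ← Finset.sum_add_distrib]
    refine Finset.sum_le_sum fun μ hμ => ?_
    have h1 := hmin μ hμ (l μ)
    rw [← hlq, minSum_of_le _ _ (hl μ), Multiset.sum_cons, hc] at h1
    have h2 := minSum_le_sum (d μ) (l μ)
    linarith
  have hsize : u + v + 1 ≤ ∑ μ ∈ F, l μ := by
    have h1 := h.size_eq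
    rw [hc] at h1 hu'
    rw [hc'] at hv'
    refine Nat.le_of_mul_le_mul_left ?_ (Nat.succ_pos c)
    rw [Nat.succ_eq_add_one]
    linarith
  obtain ⟨w, hw⟩ := Nat.exists_eq_add_of_le hsize
  refine ⟨fun b => if b then u ::ₘ x true else (v + w) ::ₘ x false, q, ?_, ⟨?_, ?_, ?_, ?_⟩, ?_⟩
  · have hz : IsZeroBlocks (∑ μ ∈ F, {Eb μ 0}) := fun b hb => by
      obtain ⟨μ, -, hμ⟩ := Multiset.mem_sum.1 hb
      exact ⟨μ, Multiset.mem_singleton.1 hμ⟩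
    refine (hz.degen_add _).trans (TransG.degen ?_)
    refine .inr <| .inr <| .inr <| .inr <| .inr ⟨F.toList.map fun μ => (μ, l μ), u, v + w,
      (x true).map (Lb true) + (x false).map (Lb false) + ∑ μ ∈ F, (q μ).map (Eb μ), ?_, ?_, ?_, ?_⟩
    · rw [List.map_map]
      simpa [Function.comp_def] using F.nodup_toList
    · simp only [List.map_map, Function.comp_def, Finset.sum_map_toList]
      omega
    · have h1 : ((List.map (fun x : Option ℂ × ℕ => Eb x.1 x.2) (F.toList.map fun μ => (μ, l μ)) :
          List KBlock) : Multiset KBlock) = ∑ μ ∈ F, {Eb μ (l μ)} := by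
        rw [List.map_map, ← Multiset.map_coe, Finset.coe_toList, Finset.sum_eq_multiset_sum,
          ← Multiset.sum_map_singleton (Multiset.map _ F.1), Multiset.map_map]
        rfl
      have h2 : ∑ μ ∈ F, (e μ).map (Eb μ) + ∑ μ ∈ F, {Eb μ 0} =
          ∑ μ ∈ F, {Eb μ (l μ)} + ∑ μ ∈ F, (q μ).map (Eb μ) := by
        rw [← Finset.sum_add_distrib, ← Finset.sum_add_distrib]
        refine Finset.sum_congr rfl fun μ _ => ?_
        rw [add_comm, Multiset.singleton_add, Multiset.singleton_add, ← Multiset.map_cons,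
          ← Multiset.map_cons, hlq]
      rw [h1, assemble, add_assoc, h2]
      abel
    · simp [assemble, Lb]
      exact Multiset.cons_swap _ _ _
  · rintro (_ | _) i
    · have := hv i
      simp
      omega
    · have := hu i
      simp
      omega
  · intro μ hμ k
    simpa using minSum_tail_le (k := k) (by rw [← hlq]; exact hl μ) hlt (hmin μ hμ)
  · simp
    omega
  · have := h.size_eq
    simp
    omega
  · simp

/-- The singular parts being equally large, the regular part can absorb a unit. -/
theorem Dominates.exists_regular_slack {F : Finset (Option ℂ)} {x y : Bool → Multiset ℕ}
    {e d : Option ℂ → Multiset ℕ} (h : Dominates F x e y d)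
    (heq : (x true).card = (y true).card)
    (hsum : (y true).sum + (y false).sum < (x true).sum + (x false).sum) :
    ∃ μ ∈ F, ∃ l q, (e μ = l ::ₘ q ∨ (l = 0 ∧ e μ = q)) ∧
      ∀ k, l < k → minSum (e μ) k + k * (x true).card < minSum (d μ) k + k * (y true).card := by
  obtain ⟨μ, hμ, hlt⟩ : ∃ μ ∈ F, (e μ).sum < (d μ).sum := by
    refine Finset.exists_lt_of_sum_lt ?_
    have := h.size_eq
    omega
  obtain ⟨l, h1, h2⟩ := (e μ).exists_upper_bound_mem_or_zero
  refine ⟨μ, hμ, l, ?_⟩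
  have key : ∀ k, l < k →
      minSum (e μ) k + k * (x true).card < minSum (d μ) k + k * (y true).card := fun k hk => by
    have h3 := h.minSum_le μ hμ l
    rw [heq] at h3 ⊢
    rw [minSum_of_le _ _ h1] at h3
    have h4 := minSum_le_sum (e μ) k
    by_contra hcon
    have h5 := sum_le_minSum_of_minSum_le (d μ) hk (by omega)
    have h6 := minSum_mono (d μ) hk.le
    omega
  rcases h2 with rfl | h2
  · exact ⟨e μ, .inr ⟨rfl, rfl⟩, key⟩
  · obtain ⟨q, hq⟩ := Multiset.exists_cons_of_mem h2
    exact ⟨q, .inl hq, key⟩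

theorem exists_decrease_of_sum_lt {a b : Multiset ℕ} (hcard : a.card = b.card)
    (hsum : b.sum < a.sum) : ∃ M ∈ a, 1 ≤ M ∧ ∀ i, M ≤ i → capSum a i < capSum b i := by
  obtain ⟨M, h1, h2⟩ := a.exists_upper_bound_mem_or_zero
  have hM : M ≠ 0 := by
    rintro rfl
    have := Multiset.sum_eq_zero_iff.2 fun p hp => Nat.le_zero.1 (h1 p hp)
    omega
  refine ⟨M, h2.resolve_left hM, by omega, fun i hi => ?_⟩
  have h3 := capSum_add_sum_of_le a i fun p hp => (h1 p hp).trans hi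
  have h4 := card_mul_le_capSum_add_sum b i
  rw [hcard] at h3
  omega

theorem sum_le_of_capSum_le {a b : Multiset ℕ} (hcard : a.card = b.card)
    (hle : ∀ i, capSum a i ≤ capSum b i) : b.sum ≤ a.sum := by
  have h1 := capSum_add_sum_of_sum_le a (a.sum + b.sum) (by omega)
  have h2 := capSum_add_sum_of_sum_le b (a.sum + b.sum) (by omega)
  have := hle (a.sum + b.sum)
  rw [hcard] at h1
  omega

theorem Dominates.degen_of_card_eq {F : Finset (Option ℂ)} {x y : Bool → Multiset ℕ}
    {e d : Option ℂ → Multiset ℕ} (h : Dominates F x e y d)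
    (heq : (x true).card = (y true).card) : Degen (assemble F x e) (assemble F y d) := by
  induction hn : (x true).sum + (x false).sum using Nat.strong_induction_on
    generalizing x e with
  | _ n ih =>
    have heq' : ∀ b, (x b).card = (y b).card := by
      have := h.card_eq
      rintro (_ | _) <;> omega
    have hle := fun b => sum_le_of_capSum_le (heq' b) (h.capSum_le b)
    by_cases hsum : ∀ b, (x b).sum = (y b).sum
    · refine ((degen_map_Lb true (heq' true) (hsum true) (h.capSum_le true)).add
        (degen_map_Lb false (heq' false) (hsum false) (h.capSum_le false))).add
        (Degen.sum F fun μ hμ => ?_)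
      have hmin : ∀ μ ∈ F, ∀ k, minSum (e μ) k ≤ minSum (d μ) k := fun μ hμ k => by
        have := h.minSum_le μ hμ k
        rw [heq] at this
        omega
      have hles : ∀ μ ∈ F, (e μ).sum ≤ (d μ).sum := fun μ hμ => by
        have h1 := hmin μ hμ (e μ).sum
        rw [minSum_of_le _ _ fun p hp => Multiset.single_le_sum (by simp) p hp] at h1
        exact h1.trans (minSum_le_sum _ _)
      have hs : ∑ μ ∈ F, (e μ).sum = ∑ μ ∈ F, (d μ).sum := by
        have := h.size_eq
        have := hsum true
        have := hsum false
        omega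
      exact degen_map_Eb μ ((Finset.sum_eq_sum_iff_of_le hles).1 hs μ hμ) (hmin μ hμ)
    · push Not at hsum
      obtain ⟨b, hb⟩ := hsum
      have hlt : (y b).sum < (x b).sum := lt_of_le_of_ne (hle b) hb.symm
      have hlt' : (y true).sum + (y false).sum < (x true).sum + (x false).sum := by
        have := hle true
        have := hle false
        cases b <;> omega
      obtain ⟨M, hM, hM1, hMlt⟩ := exists_decrease_of_sum_lt (heq' b) hlt
      obtain ⟨μ, hμ, l, q, hl, hlow⟩ := h.exists_regular_slack heq hlt'
      obtain ⟨x', e', h1, h2, h3, h4⟩ := h.exists_degen_of_enlarge hM hM1 hMlt hμ hl hlow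
      exact h1.trans (ih _ (hn ▸ h4) h2 (h3.trans heq) rfl)

open Classical in
theorem Dominates.exists_degen_insert {F : Finset (Option ℂ)} {x y : Bool → Multiset ℕ}
    {e d : Option ℂ → Multiset ℕ} (h : Dominates F x e y d)
    {ν : Option ℂ} (hν : ν ∉ F) :
    Dominates (insert ν F) x (Function.update e ν 0) y (Function.update d ν 0) ↔
      (x true).card ≤ (y true).card := by
  have hs : ∀ e : Option ℂ → Multiset ℕ,
      ∑ μ ∈ insert ν F, (Function.update e ν 0 μ).sum = ∑ μ ∈ F, (e μ).sum := fun e => by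
    rw [Finset.sum_insert hν, Function.update_self, Multiset.sum_zero, zero_add]
    refine Finset.sum_congr rfl fun μ hμ => ?_
    rw [Function.update_of_ne (ne_of_mem_of_not_mem hμ hν)]
  refine ⟨fun h' => ?_, fun hle => ⟨h.capSum_le, ?_, h.card_eq, ?_⟩⟩
  · simpa using h'.minSum_le ν (Finset.mem_insert_self ν F) 1
  · intro μ hμ k
    rcases Finset.mem_insert.1 hμ with rfl | hμ
    · simpa using Nat.mul_le_mul_left k hle
    · rw [Function.update_of_ne (ne_of_mem_of_not_mem hμ hν),
        Function.update_of_ne (ne_of_mem_of_not_mem hμ hν)]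
      exact h.minSum_le μ hμ k
  · rw [hs, hs]
    exact h.size_eq

open Classical in
theorem assemble_insert_update {F : Finset (Option ℂ)} (x : Bool → Multiset ℕ)
    (e : Option ℂ → Multiset ℕ) {ν : Option ℂ} (hν : ν ∉ F) :
    assemble (insert ν F) x (Function.update e ν 0) = assemble F x e := by
  rw [assemble, assemble, Finset.sum_insert hν, Function.update_self, Multiset.map_zero, zero_add]
  congr 1
  refine Finset.sum_congr rfl fun μ hμ => ?_
  rw [Function.update_of_ne (ne_of_mem_of_not_mem hμ hν)]

/-- The numerical inequalities are sufficient for the existence of a chain of transitions. -/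
theorem Dominates.degen {F : Finset (Option ℂ)} {x y : Bool → Multiset ℕ}
    {e d : Option ℂ → Multiset ℕ} (h : Dominates F x e y d)
    (hle : (x true).card ≤ (y true).card) : Degen (assemble F x e) (assemble F y d) := by
  obtain ⟨c, hc⟩ := Nat.exists_eq_add_of_le hle
  induction c generalizing F x e d with
  | zero => exact h.degen_of_card_eq hc.symm
  | succ c ihc =>
    induction hn : (x true).sum + (x false).sum using Nat.strong_induction_on
      generalizing F x e d with
    | _ n ih =>
      have hlt : ∀ b, (x b).card < (y b).card := by
        have := h.card_eq
        rintro (_ | _) <;> omega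
      by_cases hdec : ∃ b, ∃ M ∈ x b, 1 ≤ M ∧ ∀ i, M ≤ i → capSum (x b) i < capSum (y b) i
      · obtain ⟨b, M, hM, hM1, hMlt⟩ := hdec
        classical
        obtain ⟨ν, hν⟩ := Infinite.exists_notMem_finset F
        have h' := (h.exists_degen_insert hν).2 hle
        obtain ⟨x', e', h1, h2, h3, h4⟩ := h'.exists_degen_of_enlarge hM hM1 hMlt
          (Finset.mem_insert_self ν F) (l := 0) (q := 0) (.inr ⟨rfl, Function.update_self ..⟩)
          (fun k hk => by simpa using Nat.mul_lt_mul_of_pos_left (hlt true) hk)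
        rw [assemble_insert_update x e hν] at h1
        refine h1.trans ?_
        rw [← assemble_insert_update y d hν]
        exact ih _ (hn ▸ h4) h2 (by omega) (by omega) rfl
      · have hins : ∀ b, ∃ u, (∀ i, capSum (x b) i + (i - u) ≤ capSum (y b) i) ∧
            (y b).card * u + (x b).sum ≤ (x b).card * u + (y b).sum := fun b =>
          (exists_decrease_or_insert (hlt b) (h.capSum_le b)).resolve_left fun h' => hdec ⟨b, h'⟩
        obtain ⟨u, hu, hu'⟩ := hins true
        obtain ⟨v, hv, hv'⟩ := hins false
        obtain ⟨x', e', h1, h2, h3⟩ := h.exists_degen_of_merge (hlt true) hu hu' hv hv'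
        exact h1.trans (ihc h2 (by omega) (by omega))

/-- The linear map `X ↦ A X s - B X t` attached to the pencils `(A, B)` and `(s, t)`. -/
def interMap {m n k k' : Type*} [Fintype n] [Fintype k]
    (A B : Matrix m n ℂ) (s t : Matrix k k' ℂ) : Matrix n k ℂ →ₗ[ℂ] Matrix m k' ℂ where
  toFun X := A * X * s - B * X * t
  map_add' X Y := by simp only [Matrix.mul_add, Matrix.add_mul]; abel
  map_smul' c X := by simp [smul_sub]

/-- The dimension of the space of solutions of `A X s = B X t`. -/
def interNullity {m n k k' : Type*} [Fintype n] [Fintype k]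
    (A B : Matrix m n ℂ) (s t : Matrix k k' ℂ) : ℕ :=
  Module.finrank ℂ (LinearMap.ker (interMap A B s t))

theorem mem_ker_interMap {m n k k' : Type*} [Fintype n] [Fintype k]
    {A B : Matrix m n ℂ} {s t : Matrix k k' ℂ} {X : Matrix n k ℂ} :
    X ∈ LinearMap.ker (interMap A B s t) ↔ A * X * s = B * X * t := by
  simp [interMap, sub_eq_zero]

theorem finrank_ker_congr {V V' W W' : Type*} [AddCommGroup V] [Module ℂ V] [AddCommGroup V']
    [Module ℂ V'] [AddCommGroup W] [Module ℂ W] [AddCommGroup W'] [Module ℂ W']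
    (T : V →ₗ[ℂ] W) (T' : V' →ₗ[ℂ] W') (φ : V ≃ₗ[ℂ] V') (h : ∀ v, T v = 0 ↔ T' (φ v) = 0) :
    Module.finrank ℂ (LinearMap.ker T) = Module.finrank ℂ (LinearMap.ker T') := by
  have : (LinearMap.ker T).map (φ : V →ₗ[ℂ] V') = LinearMap.ker T' := by
    ext v
    simp only [Submodule.mem_map, LinearMap.mem_ker, h]
    exact ⟨by rintro ⟨u, hu, rfl⟩; exact hu, fun hv => ⟨φ.symm v, by simpa using hv, by simp⟩⟩
  rw [← this]
  exact (LinearEquiv.finrank_map_eq φ _).symm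

theorem finrank_ker_prodMap {V V' W W' : Type*} [AddCommGroup V] [Module ℂ V] [AddCommGroup V']
    [Module ℂ V'] [AddCommGroup W] [Module ℂ W] [AddCommGroup W'] [Module ℂ W']
    [FiniteDimensional ℂ V] [FiniteDimensional ℂ V']
    (T : V →ₗ[ℂ] W) (T' : V' →ₗ[ℂ] W') :
    Module.finrank ℂ (LinearMap.ker (T.prodMap T')) =
      Module.finrank ℂ (LinearMap.ker T) + Module.finrank ℂ (LinearMap.ker T') := by
  rw [LinearMap.ker_prodMap, ← Module.finrank_prod]
  exact LinearEquiv.finrank_eq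
    { toFun := fun v => (⟨v.1.1, v.2.1⟩, ⟨v.1.2, v.2.2⟩)
      invFun := fun v => ⟨(v.1.1, v.2.1), v.1.2, v.2.2⟩
      map_add' := fun _ _ => rfl
      map_smul' := fun _ _ => rfl
      left_inv := fun _ => rfl
      right_inv := fun _ => rfl }

theorem interNullity_submatrix {m n m' n' k k' : Type*} [Fintype n] [Fintype n'] [Fintype k]
    (A B : Matrix m n ℂ) (s t : Matrix k k' ℂ) (e : m' ≃ m) (f : n' ≃ n) :
    interNullity (A.submatrix e f) (B.submatrix e f) s t = interNullity A B s t := by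
  refine finrank_ker_congr _ _ (Matrix.reindexLinearEquiv ℂ ℂ f (Equiv.refl k)) fun X => ?_
  have key : ∀ C : Matrix m n ℂ, ∀ u : Matrix k k' ℂ,
      C.submatrix e f * X * u = (C * (X.submatrix f.symm id) * u).submatrix e id := fun C u => by
    have h1 := Matrix.submatrix_mul_equiv (C * X.submatrix f.symm id) u e (Equiv.refl k) id
    have h2 := Matrix.submatrix_mul_equiv C (X.submatrix f.symm id) e f id
    rw [← h1, Equiv.coe_refl, ← h2]
    simp
  rw [← LinearMap.mem_ker, ← LinearMap.mem_ker, mem_ker_interMap, mem_ker_interMap, key, key]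
  refine ⟨fun h => ?_, fun h => ?_⟩
  · have := congrArg (fun M => M.submatrix e.symm id) h
    simpa using this
  · exact congrArg (fun M => M.submatrix e id) h

theorem interNullity_mul {m n k k' : Type*} [Fintype m] [DecidableEq m] [Fintype n] [DecidableEq n]
    [Fintype k] (A B : Matrix m n ℂ) (s t : Matrix k k' ℂ) {S : Matrix m m ℂ} {R : Matrix n n ℂ}
    (hS : IsUnit S) (hR : IsUnit R) :
    interNullity (S * A * R) (S * B * R) s t = interNullity A B s t := by
  obtain ⟨u, rfl⟩ := hR
  let φ : Matrix n k ℂ ≃ₗ[ℂ] Matrix n k ℂ :=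
    { toFun := fun X => u.1 * X
      invFun := fun X => u⁻¹.1 * X
      map_add' := fun X Y => Matrix.mul_add _ _ _
      map_smul' := fun c X => by simp
      left_inv := fun X => by simp [← Matrix.mul_assoc]
      right_inv := fun X => by simp [← Matrix.mul_assoc] }
  refine finrank_ker_congr _ _ φ fun X => ?_
  rw [← LinearMap.mem_ker, ← LinearMap.mem_ker, mem_ker_interMap, mem_ker_interMap]
  change _ ↔ A * (u.1 * X) * s = B * (u.1 * X) * t
  obtain ⟨v, rfl⟩ := hS
  refine ⟨fun h => ?_, fun h => ?_⟩
  · have := congrArg (fun M => v⁻¹.1 * M) h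
    simpa only [← Matrix.mul_assoc, Units.inv_mul, Matrix.one_mul] using this
  · have := congrArg (fun M => v.1 * M) h
    simpa only [← Matrix.mul_assoc] using this

theorem interNullity_fromBlocks {m n m' n' k k' : Type*} [Fintype n] [Fintype n'] [Fintype k]
    (A B : Matrix m n ℂ) (A' B' : Matrix m' n' ℂ) (s t : Matrix k k' ℂ) :
    interNullity (fromBlocks A 0 0 A') (fromBlocks B 0 0 B') s t =
      interNullity A B s t + interNullity A' B' s t := by
  let φ : Matrix (n ⊕ n') k ℂ ≃ₗ[ℂ] Matrix n k ℂ × Matrix n' k ℂ :=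
    { toFun := fun X => (X.toRows₁, X.toRows₂)
      invFun := fun Y => Matrix.fromRows Y.1 Y.2
      map_add' := fun X Y => rfl
      map_smul' := fun c X => rfl
      left_inv := fun X => by simp
      right_inv := fun X => by simp }
  rw [interNullity, interNullity, interNullity, ← finrank_ker_prodMap]
  refine finrank_ker_congr _ _ φ fun X => ?_
  have key : ∀ (C : Matrix m n ℂ) (C' : Matrix m' n' ℂ) (u : Matrix k k' ℂ),
      fromBlocks C 0 0 C' * X * u = fromRows (C * X.toRows₁ * u) (C' * X.toRows₂ * u) := by
    intro C C' u
    conv_lhs => rw [← Matrix.fromRows_toRows X]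
    rw [← Matrix.fromRows_mul, Matrix.fromBlocks_mul_fromRows]
    simp
  rw [← LinearMap.mem_ker, mem_ker_interMap, key, key, Matrix.fromRows_inj.eq_iff]
  simp only [LinearMap.prodMap_apply, Prod.mk_eq_zero, interMap, LinearMap.coe_mk, AddHom.coe_mk,
    sub_eq_zero]
  rfl

namespace Pencil

/-- The transposed pencil. -/
def tr {m n : ℕ} (P : Pencil m n) : Pencil n m := (P.1ᵀ, P.2ᵀ)

/-- The dimension of the space of solutions of `A X s = B X t` for the pencil `(A, B)`. -/
def nullity {m n k k' : ℕ} (P : Pencil m n) (s t : Matrix (Fin k) (Fin k') ℂ) : ℕ :=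
  interNullity P.1 P.2 s t

theorem StrictEquiv.nullity_eq {m n k k' : ℕ} {P Q : Pencil m n} (h : StrictEquiv P Q)
    (s t : Matrix (Fin k) (Fin k') ℂ) : P.nullity s t = Q.nullity s t := by
  obtain ⟨S, R, hS, hR, h1, h2⟩ := h
  rw [nullity, nullity, ← h1, ← h2, interNullity_mul _ _ _ _ _ hR]
  exact Matrix.isUnit_nonsing_inv_iff.2 hS

theorem nullity_cast {m n m' n' k k' : ℕ} (hm : m = m') (hn : n = n') (P : Pencil m n)
    (s t : Matrix (Fin k) (Fin k') ℂ) : (cast hm hn P).nullity s t = P.nullity s t :=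
  interNullity_submatrix _ _ _ _ _ _

theorem nullity_dsum {m n p q k k' : ℕ} (P : Pencil m n) (Q : Pencil p q)
    (s t : Matrix (Fin k) (Fin k') ℂ) :
    (dsum P Q).nullity s t = P.nullity s t + Q.nullity s t :=
  (interNullity_submatrix _ _ _ _ _ _).trans (interNullity_fromBlocks _ _ _ _ _ _)

theorem tr_dsum {m n p q : ℕ} (P : Pencil m n) (Q : Pencil p q) :
    (dsum P Q).tr = dsum P.tr Q.tr := by
  simp [tr, dsum, Matrix.fromBlocks_transpose]

theorem tr_cast {m n m' n' : ℕ} (hm : m = m') (hn : n = n') (P : Pencil m n) :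
    (cast hm hn P).tr = cast hn hm P.tr := rfl

theorem StrictEquiv.tr {m n : ℕ} {P Q : Pencil m n} (h : StrictEquiv P Q) :
    StrictEquiv P.tr Q.tr := by
  obtain ⟨S, R, hS, hR, h1, h2⟩ := h
  have h3 := (Matrix.isUnit_iff_isUnit_det _).1 hR
  refine ⟨(R⁻¹)ᵀ, (S⁻¹)ᵀ, ?_, ?_, ?_, ?_⟩
  · rw [Matrix.isUnit_transpose]
    exact Matrix.isUnit_nonsing_inv_iff.2 hR
  · rw [Matrix.isUnit_transpose]
    exact Matrix.isUnit_nonsing_inv_iff.2 hS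
  · rw [← Matrix.transpose_nonsing_inv, Matrix.nonsing_inv_nonsing_inv _ h3]
    simp [Pencil.tr, ← h1, Matrix.mul_assoc]
  · rw [← Matrix.transpose_nonsing_inv, Matrix.nonsing_inv_nonsing_inv _ h3]
    simp [Pencil.tr, ← h2, Matrix.mul_assoc]

theorem nullity_pencilOfList {k k' : ℕ} (l : List KBlock) (s t : Matrix (Fin k) (Fin k') ℂ) :
    (pencilOfList l).nullity s t = (l.map fun b => b.toPencil.nullity s t).sum := by
  induction l with
  | nil =>
    have : Subsingleton (Matrix (Fin (colsSum [])) (Fin k) ℂ) :=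
      inferInstanceAs (Subsingleton (Fin 0 → Fin k → ℂ))
    exact Module.finrank_zero_of_subsingleton
  | cons b l ih => exact (nullity_dsum _ _ _ _).trans (by simp [ih])

theorem nullity_tr_pencilOfList {k k' : ℕ} (l : List KBlock) (s t : Matrix (Fin k) (Fin k') ℂ) :
    (pencilOfList l).tr.nullity s t = (l.map fun b => b.toPencil.tr.nullity s t).sum := by
  induction l with
  | nil =>
    have : Subsingleton (Matrix (Fin (rowsSum [])) (Fin k) ℂ) :=
      inferInstanceAs (Subsingleton (Fin 0 → Fin k → ℂ))
    exact Module.finrank_zero_of_subsingleton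
  | cons b l ih =>
    have : (pencilOfList (b :: l)).tr = dsum b.toPencil.tr (pencilOfList l).tr := tr_dsum _ _
    rw [List.map_cons, List.sum_cons, ← ih, ← nullity_dsum, ← this]
    rfl

end Pencil

attribute [local instance] Matrix.normedAddCommGroup Matrix.normedSpace in
theorem Matrix.isOpen_setOf_linearIndependent {ι : Type*} [Finite ι] {m n : ℕ} :
    IsOpen {v : ι → Matrix (Fin m) (Fin n) ℂ | LinearIndependent ℂ v} :=
  isOpen_setOfPred_linearIndependent

theorem Pencil.nullity_le_of_mem_closure {m n k k' : ℕ} {P Q : Pencil m n}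
    (h : Q ∈ closure (orbE P)) (s t : Matrix (Fin k) (Fin k') ℂ) :
    P.nullity s t ≤ Q.nullity s t := by
  obtain ⟨v, hv⟩ : ∃ v : Fin (Module.finrank ℂ (LinearMap.range (interMap Q.1 Q.2 s t))) →
      Matrix (Fin n) (Fin k) ℂ, LinearIndependent ℂ fun i => interMap Q.1 Q.2 s t (v i) := by
    obtain ⟨b⟩ : Nonempty (Module.Basis (Fin _) ℂ (LinearMap.range (interMap Q.1 Q.2 s t))) :=
      ⟨Module.finBasis ℂ _⟩
    choose v hv using fun i => LinearMap.mem_range.1 (b i).2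
    refine ⟨v, ?_⟩
    have h1 := b.linearIndependent.map' (Submodule.subtype _) (Submodule.ker_subtype _)
    rwa [show (fun i => interMap Q.1 Q.2 s t (v i)) = Submodule.subtype _ ∘ b from funext hv]
  have hcont : Continuous fun (M : Pencil m n) i => interMap M.1 M.2 s t (v i) := by
    refine continuous_pi fun i => ?_
    change Continuous fun M : Pencil m n => M.1 * v i * s - M.2 * v i * t
    fun_prop
  obtain ⟨M, hM, hPM⟩ := mem_closure_iff.1 h _
    (Matrix.isOpen_setOf_linearIndependent.preimage hcont) hv
  rw [hPM.nullity_eq]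
  have h1 : Module.finrank ℂ (LinearMap.range (interMap Q.1 Q.2 s t)) ≤
      Module.finrank ℂ (LinearMap.range (interMap M.1 M.2 s t)) := by
    have : LinearIndependent ℂ fun i =>
        (⟨interMap M.1 M.2 s t (v i), v i, rfl⟩ : LinearMap.range (interMap M.1 M.2 s t)) :=
      LinearIndependent.of_comp (Submodule.subtype _) hM
    simpa using this.fintype_card_le_finrank
  have h2 := LinearMap.finrank_range_add_finrank_ker (interMap Q.1 Q.2 s t)
  have h3 := LinearMap.finrank_range_add_finrank_ker (interMap M.1 M.2 s t)
  rw [nullity, nullity, interNullity, interNullity]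
  omega

theorem Pencil.tr_mem_closure {m n : ℕ} {P Q : Pencil m n} (h : Q ∈ closure (orbE P)) :
    Q.tr ∈ closure (orbE P.tr) := by
  have hcont : Continuous (Pencil.tr : Pencil m n → Pencil n m) := by
    change Continuous fun M : Pencil m n => (M.1ᵀ, M.2ᵀ)
    fun_prop
  have hsub : Pencil.tr '' orbE P ⊆ orbE P.tr := by
    rintro _ ⟨M, hM, rfl⟩
    exact StrictEquiv.tr hM
  exact closure_mono hsub (image_closure_subset_closure_image hcont ⟨Q, h, rfl⟩)

/-- Extension of a finite sequence by zero. -/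
def extN {α : Type*} [Zero α] {n : ℕ} (f : Fin n → α) (j : ℕ) : α :=
  if h : j < n then f ⟨j, h⟩ else 0

theorem extN_of_lt {α : Type*} [Zero α] {n : ℕ} (f : Fin n → α) {j : ℕ} (h : j < n) :
    extN f j = f ⟨j, h⟩ := dif_pos h

theorem extN_of_le {α : Type*} [Zero α] {n : ℕ} (f : Fin n → α) {j : ℕ} (h : n ≤ j) :
    extN f j = 0 := dif_neg h.not_gt

@[simp] theorem extN_val {α : Type*} [Zero α] {n : ℕ} (f : Fin n → α) (j : Fin n) :
    extN f j = f j := extN_of_lt f j.2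

theorem extN_add {α : Type*} [AddZeroClass α] {n : ℕ} (f g : Fin n → α) (j : ℕ) :
    extN (f + g) j = extN f j + extN g j := by
  unfold extN
  split <;> simp

theorem extN_smul {α : Type*} [AddCommGroup α] [Module ℂ α] {n : ℕ} (a : ℂ) (f : Fin n → α)
    (j : ℕ) : extN (a • f) j = a • extN f j := by
  unfold extN
  split <;> simp

theorem eq_zero_of_extN {α : Type*} [Zero α] {n : ℕ} {f : Fin n → α} (h : ∀ j, extN f j = 0) :
    f = 0 := funext fun j => by simpa using h j

theorem sum_ite_val_mul {n : ℕ} (f : Fin n → ℂ) (a : ℕ) :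
    ∑ x : Fin n, (if (x : ℕ) = a then 1 else 0) * f x = extN f a := by
  by_cases h : a < n
  · rw [Finset.sum_eq_single ⟨a, h⟩, extN_of_lt f h]
    · simp
    · intro b _ hb
      rw [if_neg (fun h' => hb (Fin.ext h')), zero_mul]
    · simp
  · rw [extN_of_le f (not_lt.1 h)]
    refine Finset.sum_eq_zero fun x _ => ?_
    rw [if_neg (by omega), zero_mul]

theorem sum_ite_val_succ_mul {n : ℕ} (f : Fin n → ℂ) (a : ℕ) :
    ∑ x : Fin n, (if a = (x : ℕ) + 1 then 1 else 0) * f x =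
      if a = 0 then 0 else extN f (a - 1) := by
  split_ifs with h
  · exact Finset.sum_eq_zero fun x _ => by rw [if_neg (by omega), zero_mul]
  · rw [← sum_ite_val_mul]
    refine Finset.sum_congr rfl fun x _ => ?_
    congr 1
    exact if_congr (by omega) rfl rfl

/-- The rows of a matrix, extended by zero. -/
def rowN {n k : ℕ} (X : Matrix (Fin n) (Fin k) ℂ) : ℕ → Fin k → ℂ := extN X.row

theorem rowN_apply {n k : ℕ} (X : Matrix (Fin n) (Fin k) ℂ) (j : ℕ) (c : Fin k) :
    rowN X j c = extN (fun r => X r c) j := by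
  unfold rowN extN
  split <;> rfl

theorem Fmat_mul_apply {p k : ℕ} (X : Matrix (Fin (p + 1)) (Fin k) ℂ) (j : Fin p) :
    (Fmat p * X).row j = rowN X (j + 1) := by
  ext c
  rw [rowN_apply, ← sum_ite_val_mul]
  rfl

theorem Gmat_mul_apply {p k : ℕ} (X : Matrix (Fin (p + 1)) (Fin k) ℂ) (j : Fin p) :
    (Gmat p * X).row j = rowN X j := by
  ext c
  rw [rowN_apply, ← sum_ite_val_mul]
  rfl

theorem Fmat_transpose_mul_apply {p k : ℕ} (X : Matrix (Fin p) (Fin k) ℂ) (j : Fin (p + 1)) :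
    ((Fmat p)ᵀ * X).row j = if (j : ℕ) = 0 then 0 else rowN X (j - 1) := by
  ext c
  refine (sum_ite_val_succ_mul (fun r => X r c) j).trans ?_
  rw [← rowN_apply]
  split_ifs <;> rfl

theorem Gmat_transpose_mul_apply {p k : ℕ} (X : Matrix (Fin p) (Fin k) ℂ) (j : Fin (p + 1)) :
    ((Gmat p)ᵀ * X).row j = rowN X j := by
  ext c
  rw [rowN_apply, ← sum_ite_val_mul, Matrix.row_apply, Matrix.mul_apply]
  refine Finset.sum_congr rfl fun x _ => ?_
  congr 1
  exact if_congr eq_comm rfl rfl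

theorem Jmat_eq (k : ℕ) (μ : ℂ) : Jmat k μ = μ • 1 + Jmat k 0 := by
  ext i j
  by_cases h : i = j
  · simp [Jmat, h]
  · have : (j : ℕ) ≠ i := fun h' => h (Fin.ext h'.symm)
    simp [Jmat, h, this]

theorem Jmat_zero_mul_apply {l k : ℕ} (X : Matrix (Fin l) (Fin k) ℂ) (j : Fin l) :
    (Jmat l 0 * X).row j = rowN X (j + 1) := by
  ext c
  rw [rowN_apply, ← sum_ite_val_mul, Matrix.row_apply, Matrix.mul_apply]
  refine Finset.sum_congr rfl fun x _ => ?_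
  congr 1
  simp only [Jmat, Matrix.of_apply]
  split_ifs <;> first | rfl | omega

theorem vecMul_Fmat {i : ℕ} (v : Fin i → ℂ) (c : Fin (i + 1)) :
    (v ᵥ* Fmat i) c = if (c : ℕ) = 0 then 0 else extN v (c - 1) := by
  rw [← sum_ite_val_succ_mul, Matrix.vecMul, dotProduct]
  exact Finset.sum_congr rfl fun x _ => mul_comm (v x) _

theorem vecMul_Gmat {i : ℕ} (v : Fin i → ℂ) (c : Fin (i + 1)) :
    (v ᵥ* Gmat i) c = extN v c := by
  rw [← sum_ite_val_mul, Matrix.vecMul, dotProduct]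
  refine Finset.sum_congr rfl fun x _ => (mul_comm (v x) _).trans ?_
  congr 1
  exact if_congr eq_comm rfl rfl

theorem vecMul_Jmat_zero {k : ℕ} (v : Fin k → ℂ) (c : Fin k) :
    (v ᵥ* Jmat k 0) c = if (c : ℕ) = 0 then 0 else extN v (c - 1) := by
  rw [← sum_ite_val_succ_mul, Matrix.vecMul, dotProduct]
  refine Finset.sum_congr rfl fun x _ => (mul_comm (v x) _).trans ?_
  congr 1
  simp only [Jmat, Matrix.of_apply]
  split_ifs <;> first | rfl | omega

theorem eq_iff_row_eq {a b : Type*} {M N : Matrix a b ℂ} : M = N ↔ ∀ j, M.row j = N.row j :=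
  ⟨fun h _ => h ▸ rfl, fun h => Matrix.ext fun i j => congrFun (h i) j⟩

theorem row_mul_mul {a b c d : Type*} [Fintype b] [Fintype c] (A : Matrix a b ℂ)
    (X : Matrix b c ℂ) (s : Matrix c d ℂ) (j : a) : (A * X * s).row j = (A * X).row j ᵥ* s := rfl

theorem rowN_val {n k : ℕ} (X : Matrix (Fin n) (Fin k) ℂ) (j : Fin n) : rowN X j = X.row j :=
  extN_val _ j

theorem rowN_of_le {n k : ℕ} (X : Matrix (Fin n) (Fin k) ℂ) {j : ℕ} (h : n ≤ j) : rowN X j = 0 :=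
  extN_of_le _ h

section Rows

variable {k k' : ℕ} {s t : Matrix (Fin k) (Fin k') ℂ}

theorem mem_ker_L {p : ℕ} {X : Matrix (Fin (p + 1)) (Fin k) ℂ} :
    X ∈ LinearMap.ker (interMap (Fmat p) (Gmat p) s t) ↔
      ∀ j < p, rowN X (j + 1) ᵥ* s = rowN X j ᵥ* t := by
  rw [mem_ker_interMap, eq_iff_row_eq]
  simp only [row_mul_mul, Fmat_mul_apply, Gmat_mul_apply]
  exact ⟨fun h j hj => h ⟨j, hj⟩, fun h j => h j j.2⟩

theorem mem_ker_LT {p : ℕ} {X : Matrix (Fin p) (Fin k) ℂ}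
    (h : X ∈ LinearMap.ker (interMap (Fmat p)ᵀ (Gmat p)ᵀ s t)) :
    rowN X 0 ᵥ* t = 0 ∧ ∀ j, rowN X j ᵥ* s = rowN X (j + 1) ᵥ* t := by
  rw [mem_ker_interMap, eq_iff_row_eq] at h
  simp only [row_mul_mul, Fmat_transpose_mul_apply, Gmat_transpose_mul_apply] at h
  refine ⟨by simpa using (h 0).symm, fun j => ?_⟩
  rcases lt_or_ge j p with hj | hj
  · simpa using h ⟨j + 1, by omega⟩
  · simp [rowN_of_le X hj, rowN_of_le X (hj.trans (Nat.le_succ _))]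

theorem mem_ker_E {l : ℕ} {ν : ℂ} {X : Matrix (Fin l) (Fin k) ℂ} :
    X ∈ LinearMap.ker (interMap (Jmat l ν) 1 s t) ↔
      ∀ j < l, rowN X j ᵥ* (t - ν • s) = rowN X (j + 1) ᵥ* s := by
  have key : ∀ j : Fin l, (Jmat l ν * X * s).row j = ((1 : Matrix (Fin l) (Fin l) ℂ) * X * t).row j ↔
      rowN X j ᵥ* (t - ν • s) = rowN X (j + 1) ᵥ* s := fun j => by
    have h1 : (Jmat l ν * X).row j = ν • rowN X j + rowN X (j + 1) := by
      rw [← Jmat_zero_mul_apply, Jmat_eq l ν, Matrix.add_mul, rowN_val, Matrix.smul_mul,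
        Matrix.one_mul]
      rfl
    rw [row_mul_mul, row_mul_mul, h1, Matrix.one_mul, ← rowN_val,
      Matrix.vecMul_sub, sub_eq_iff_eq_add, Matrix.add_vecMul, Matrix.smul_vecMul,
      Matrix.vecMul_smul, add_comm, eq_comm]
  rw [mem_ker_interMap, eq_iff_row_eq]
  exact ⟨fun h j hj => (key ⟨j, hj⟩).1 (h _), fun h j => (key j).2 (h j j.2)⟩

theorem mem_ker_EInf {l : ℕ} {X : Matrix (Fin l) (Fin k) ℂ} :
    X ∈ LinearMap.ker (interMap 1 (Jmat l 0) s t) ↔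
      ∀ j < l, rowN X j ᵥ* s = rowN X (j + 1) ᵥ* t := by
  rw [mem_ker_interMap, eq_iff_row_eq]
  simp only [row_mul_mul, Jmat_zero_mul_apply]
  simp only [Matrix.one_mul, ← rowN_val]
  exact ⟨fun h j hj => h ⟨j, hj⟩, fun h j => h j j.2⟩

end Rows

theorem finrank_ker_eq_of_param {V W : Type*} [AddCommGroup V] [Module ℂ V] [AddCommGroup W]
    [Module ℂ W] {r : ℕ} (T : V →ₗ[ℂ] W) (f : (Fin r → ℂ) →ₗ[ℂ] V) (g : V →ₗ[ℂ] Fin r → ℂ)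
    (hf : ∀ a, f a ∈ LinearMap.ker T) (hgf : ∀ a, g (f a) = a)
    (hfg : ∀ v ∈ LinearMap.ker T, f (g v) = v) :
    Module.finrank ℂ (LinearMap.ker T) = r := by
  rw [LinearEquiv.finrank_eq (LinearEquiv.ofLinearMap (g.comp (Submodule.subtype _))
    (f.codRestrict (LinearMap.ker T) hf) (LinearMap.ext fun a => hgf a)
    (LinearMap.ext fun v => Subtype.ext (hfg v v.2)))]
  simp

theorem eq_zero_of_descending {V W : Type*} [Zero V] [AddCommGroup W]
    {l : ℕ} {y : ℕ → V} (f g : V → W) (hg : g 0 = 0) (hf : ∀ v, f v = 0 → v = 0)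
    (h0 : ∀ j, l ≤ j → y j = 0) (h : ∀ j < l, f (y j) = g (y (j + 1))) (j : ℕ) : y j = 0 := by
  by_cases hj : l ≤ j
  · exact h0 j hj
  · have h1 : y (j + 1) = 0 := eq_zero_of_descending f g hg hf h0 h (j + 1)
    exact hf _ (by rw [h j (not_le.1 hj), h1, hg])
termination_by l - j

theorem eq_zero_of_ascending {V W : Type*} [Zero V] [AddCommGroup W]
    {y : ℕ → V} (f g : V → W) (hg : g 0 = 0) (hf : ∀ v, f v = 0 → v = 0)
    (h0 : f (y 0) = 0) (h : ∀ j, f (y (j + 1)) = g (y j)) (j : ℕ) : y j = 0 := by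
  induction j with
  | zero => exact hf _ h0
  | succ j ih => exact hf _ (by rw [h j, ih, hg])

theorem eq_zero_of_rowN {n k : ℕ} {X : Matrix (Fin n) (Fin k) ℂ} (h : ∀ j, rowN X j = 0) :
    X = 0 := by
  ext i c
  have := h i
  rw [rowN_val] at this
  exact congrFun this c

theorem finrank_ker_eq_zero_of {V W : Type*} [AddCommGroup V] [Module ℂ V] [AddCommGroup W]
    [Module ℂ W] (T : V →ₗ[ℂ] W) (h : ∀ v ∈ LinearMap.ker T, v = 0) :
    Module.finrank ℂ (LinearMap.ker T) = 0 := by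
  rw [(Submodule.eq_bot_iff _).2 h, finrank_bot]

/-- A matrix is left-injective if its rows are linearly independent. -/
def LeftInj {k k' : ℕ} (s : Matrix (Fin k) (Fin k') ℂ) : Prop := ∀ v, v ᵥ* s = 0 → v = 0

theorem LeftInj.one {k : ℕ} : LeftInj (1 : Matrix (Fin k) (Fin k) ℂ) := fun v h => by simpa using h

theorem LeftInj.Gmat (i : ℕ) : LeftInj (Gmat i) := fun v h => by
  ext c
  have := congrFun h c.castSucc
  rw [vecMul_Gmat] at this
  simpa using this

theorem LeftInj.Fmat_sub (i : ℕ) (ν : ℂ) : LeftInj (Fmat i - ν • _root_.Gmat i) := fun v h => by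
  refine eq_zero_of_extN (eq_zero_of_descending (l := i) id (fun a => ν * a) (by simp) (by simp)
    (fun j hj => extN_of_le v hj) fun j hj => ?_)
  have := congrFun h ⟨j + 1, by omega⟩
  rw [Matrix.vecMul_sub, Matrix.vecMul_smul, Pi.sub_apply, vecMul_Fmat, Pi.smul_apply,
    vecMul_Gmat] at this
  simpa [sub_eq_zero] using this

theorem LeftInj.add_smul_Jmat {k : ℕ} {a : ℂ} (ha : a ≠ 0) (b : ℂ) :
    LeftInj (a • (1 : Matrix (Fin k) (Fin k) ℂ) + b • Jmat k 0) := fun v h => by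
  have key : ∀ c : Fin k, a * v c + b * (if (c : ℕ) = 0 then 0 else extN v (c - 1)) = 0 := fun c => by
    have := congrFun h c
    rw [Matrix.vecMul_add, Matrix.vecMul_smul, Matrix.vecMul_smul, Matrix.vecMul_one, Pi.add_apply,
      Pi.smul_apply, Pi.smul_apply, vecMul_Jmat_zero] at this
    simpa using this
  refine eq_zero_of_extN fun j => ?_
  induction j with
  | zero =>
    by_cases hj : 0 < k
    · have := key ⟨0, hj⟩
      rw [extN_of_lt v hj]
      simpa [ha] using this
    · exact extN_of_le v (not_lt.1 hj)
  | succ j ih =>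
    by_cases hj : j + 1 < k
    · have := key ⟨j + 1, hj⟩
      rw [extN_of_lt v hj]
      simpa [ha, ih] using this
    · exact extN_of_le v (not_lt.1 hj)

section Vanishing

variable {k k' : ℕ} {s t : Matrix (Fin k) (Fin k') ℂ}

theorem nullity_E_eq_zero {ν : ℂ} (h : LeftInj (t - ν • s)) (l : ℕ) :
    (Eblk l ν).nullity s t = 0 :=
  finrank_ker_eq_zero_of _ fun X hX => eq_zero_of_rowN <|
    eq_zero_of_descending (l := l) (fun v => v ᵥ* (t - ν • s)) (fun v => v ᵥ* s)
      (Matrix.zero_vecMul _) h (fun _ hj => rowN_of_le X hj) (mem_ker_E.1 hX)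

theorem nullity_EInf_eq_zero (h : LeftInj s) (l : ℕ) : (EInfblk l).nullity s t = 0 :=
  finrank_ker_eq_zero_of _ fun X hX => eq_zero_of_rowN <|
    eq_zero_of_descending (l := l) (fun v => v ᵥ* s) (fun v => v ᵥ* t)
      (Matrix.zero_vecMul _) h (fun _ hj => rowN_of_le X hj) (mem_ker_EInf.1 hX)

theorem nullity_LT_eq_zero (h : LeftInj s) (p : ℕ) : (LTblk p).nullity s t = 0 :=
  finrank_ker_eq_zero_of _ fun X hX => eq_zero_of_rowN <|
    eq_zero_of_descending (l := p) (fun v => v ᵥ* s) (fun v => v ᵥ* t)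
      (Matrix.zero_vecMul _) h (fun _ hj => rowN_of_le X hj) fun j _ => (mem_ker_LT hX).2 j

theorem nullity_LT_eq_zero' (h : LeftInj t) (p : ℕ) : (LTblk p).nullity s t = 0 :=
  finrank_ker_eq_zero_of _ fun _ hX => eq_zero_of_rowN <|
    eq_zero_of_ascending (fun v => v ᵥ* t) (fun v => v ᵥ* s)
      (Matrix.zero_vecMul _) h (mem_ker_LT hX).1 fun j => ((mem_ker_LT hX).2 j).symm

end Vanishing

theorem shift_eq {l k : ℕ} {Y : ℕ → ℕ → ℂ}
    (h : ∀ j < l, ∀ c < k, Y (j + 1) c = if c = 0 then 0 else Y j (c - 1)) :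
    ∀ j ≤ l, ∀ c < k, Y j c = if j ≤ c then Y 0 (c - j) else 0 := by
  intro j
  induction j with
  | zero => simp
  | succ j ih =>
    intro hj c hc
    rw [h j hj c hc]
    rcases c with _ | c
    · simp
    · rw [if_neg (Nat.succ_ne_zero c), Nat.add_sub_cancel, ih (by omega) c (by omega)]
      simp

theorem extN_rowN {n k : ℕ} (X : Matrix (Fin n) (Fin k) ℂ) {j c : ℕ} (hj : j < n) (hc : c < k) :
    extN (rowN X j) c = X ⟨j, hj⟩ ⟨c, hc⟩ := by
  rw [extN_of_lt _ hc, rowN_apply, extN_of_lt _ hj]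

theorem nullity_L_one_left {k : ℕ} (p : ℕ) (t : Matrix (Fin k) (Fin k) ℂ) :
    (Lblk p).nullity 1 t = k := by
  refine finrank_ker_eq_of_param _
    { toFun := fun a => Matrix.of fun (j : Fin (p + 1)) => a ᵥ* t ^ (j : ℕ)
      map_add' := fun a b => by ext; simp [Matrix.add_vecMul]
      map_smul' := fun c a => by ext; simp [Matrix.smul_vecMul] }
    { toFun := fun X => X.row 0
      map_add' := fun a b => rfl
      map_smul' := fun c a => rfl } (fun a => ?_) (fun a => ?_) fun X hX => ?_
  · refine mem_ker_L.2 fun j hj => ?_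
    have h1 : ∀ i (hi : i < p + 1), rowN (Matrix.of fun (j : Fin (p + 1)) => a ᵥ* t ^ (j : ℕ)) i =
        a ᵥ* t ^ i := fun i hi => rowN_val _ ⟨i, hi⟩
    refine (congrArg (· ᵥ* (1 : Matrix (Fin k) (Fin k) ℂ)) (h1 (j + 1) (by omega))).trans
      (.trans ?_ (congrArg (· ᵥ* t) (h1 j (by omega)).symm))
    simp [pow_succ]
  · ext c
    change (a ᵥ* t ^ 0) c = a c
    simp
  · have h1 := mem_ker_L.1 hX
    have h2 : ∀ j, j < p + 1 → rowN X j = X.row 0 ᵥ* t ^ j := by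
      intro j
      induction j with
      | zero => intro _; simpa using rowN_val X 0
      | succ j ih =>
        intro hj
        have := h1 j (by omega)
        rw [ih (by omega), Matrix.vecMul_one] at this
        rw [this, pow_succ, Matrix.vecMul_vecMul]
    refine eq_iff_row_eq.2 fun j => ?_
    rw [← rowN_val X, h2 j j.2]
    rfl

theorem nullity_L_one_right {k : ℕ} (p : ℕ) (s : Matrix (Fin k) (Fin k) ℂ) :
    (Lblk p).nullity s 1 = k := by
  refine finrank_ker_eq_of_param _
    { toFun := fun a => Matrix.of fun (j : Fin (p + 1)) => a ᵥ* s ^ (p - (j : ℕ))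
      map_add' := fun a b => by ext; simp [Matrix.add_vecMul]
      map_smul' := fun c a => by ext; simp [Matrix.smul_vecMul] }
    { toFun := fun X => X.row (Fin.last p)
      map_add' := fun a b => rfl
      map_smul' := fun c a => rfl } (fun a => ?_) (fun a => ?_) fun X hX => ?_
  · refine mem_ker_L.2 fun j hj => ?_
    have h1 : ∀ i (hi : i < p + 1), rowN (Matrix.of fun (j : Fin (p + 1)) =>
        a ᵥ* s ^ (p - (j : ℕ))) i = a ᵥ* s ^ (p - i) := fun i hi => rowN_val _ ⟨i, hi⟩
    refine (congrArg (· ᵥ* s) (h1 (j + 1) (by omega))).trans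
      (.trans ?_ (congrArg (· ᵥ* (1 : Matrix (Fin k) (Fin k) ℂ)) (h1 j (by omega)).symm))
    rw [Matrix.vecMul_one, Matrix.vecMul_vecMul, ← pow_succ]
    congr 2
    omega
  · ext c
    change (a ᵥ* s ^ (p - p)) c = a c
    simp
  · have h1 := mem_ker_L.1 hX
    have h2 : ∀ j, j < p + 1 → rowN X (p - j) = X.row (Fin.last p) ᵥ* s ^ j := by
      intro j
      induction j with
      | zero => intro _; simpa using rowN_val X (Fin.last p)
      | succ j ih =>
        intro hj
        have := h1 (p - (j + 1)) (by omega)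
        rw [show p - (j + 1) + 1 = p - j by omega, ih (by omega), Matrix.vecMul_one] at this
        rw [← this, pow_succ, Matrix.vecMul_vecMul]
    refine eq_iff_row_eq.2 fun j => ?_
    have := h2 (p - j) (by omega)
    rw [show p - (p - (j : ℕ)) = j by omega, rowN_val] at this
    rw [this]
    rfl

theorem nullity_L_L (p i : ℕ) : (Lblk p).nullity (Gmat i) (Fmat i) = i - p := by
  refine finrank_ker_eq_of_param _
    { toFun := fun a => Matrix.of fun (j : Fin (p + 1)) (c : Fin i) =>
        if (j : ℕ) ≤ c then extN a (c - j) else 0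
      map_add' := fun a b => by ext; simp only [Matrix.of_apply, extN_add, Matrix.add_apply]; split <;> simp
      map_smul' := fun c a => by ext; simp [extN_smul] }
    { toFun := fun X d => X 0 ⟨d, by omega⟩
      map_add' := fun a b => rfl
      map_smul' := fun c a => rfl } (fun a => ?_) (fun a => ?_) fun X hX => ?_
  · refine mem_ker_L.2 fun j hj => ?_
    ext c
    have h1 : ∀ r (hr : r < p + 1) c, extN (rowN (Matrix.of fun (j : Fin (p + 1)) (c : Fin i) =>
        if (j : ℕ) ≤ c then extN a (c - j) else 0) r) c =
        if c < i ∧ r ≤ c then extN a (c - r) else 0 := fun r hr c => by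
      by_cases hc : c < i
      · rw [extN_rowN _ hr hc]
        simp [hc]
      · rw [extN_of_le _ (not_lt.1 hc), if_neg (by tauto)]
    refine (vecMul_Gmat _ c).trans (.trans ?_ (vecMul_Fmat _ c).symm)
    refine (h1 (j + 1) (by omega) c).trans (.trans ?_ (if_congr Iff.rfl rfl (h1 j (by omega) _).symm))
    by_cases hc : (c : ℕ) = 0
    · simp [hc]
    · rw [if_neg hc]
      by_cases hc' : c = i
      · rw [if_neg (by omega)]
        split_ifs
        · exact (extN_of_le _ (by omega)).symm
        · rfl
      · rw [show (c : ℕ) - (j + 1) = c - 1 - j by omega]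
        exact if_congr (by omega) rfl rfl
  · ext d
    change (if 0 ≤ (d : ℕ) then extN a (d - 0) else 0) = a d
    simp
  · have h1 := mem_ker_L.1 hX
    have h2 := shift_eq (l := p) (k := i + 1) (Y := fun j c => extN (rowN X j) c) (fun j hj c hc => by
      have := congrFun (h1 j hj) ⟨c, hc⟩
      rwa [vecMul_Gmat, vecMul_Fmat] at this)
    have h3 : ∀ c (hc : c < i), i - p ≤ c → X 0 ⟨c, hc⟩ = 0 := fun c hc hpc => by
      have := h2 (i - c) (by omega) i (by omega)
      rw [if_pos (by omega), extN_of_le _ le_rfl, show i - (i - c) = c by omega,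
        extN_rowN X (by omega) hc] at this
      exact this.symm
    ext j c
    have h4 := h2 j (by omega) c (by omega)
    rw [extN_rowN X j.2 c.2] at h4
    refine .trans ?_ h4.symm
    change (if (j : ℕ) ≤ c then extN _ _ else 0) = _
    refine if_congr Iff.rfl ?_ rfl
    rw [extN_rowN X p.succ_pos (by omega : (c : ℕ) - j < i)]
    by_cases hd : (c : ℕ) - j < i - p
    · exact extN_of_lt _ hd
    · rw [extN_of_le _ (not_lt.1 hd)]
      exact (h3 _ (by omega) (not_lt.1 hd)).symm

theorem finrank_of_mem_iff_shift {W : Type*} [AddCommGroup W] [Module ℂ W] {l k : ℕ}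
    (T : Matrix (Fin l) (Fin k) ℂ →ₗ[ℂ] W)
    (hT : ∀ X, X ∈ LinearMap.ker T ↔ ∀ j < l, rowN X (j + 1) = rowN X j ᵥ* Jmat k 0) :
    Module.finrank ℂ (LinearMap.ker T) = min k l := by
  refine finrank_ker_eq_of_param _
    { toFun := fun a => Matrix.of fun (j : Fin l) (c : Fin k) => extN a (k - 1 - c + j)
      map_add' := fun a b => by ext; simp [extN_add]
      map_smul' := fun c a => by ext; simp [extN_smul] }
    { toFun := fun (X : Matrix (Fin l) (Fin k) ℂ) (d : Fin (min k l)) =>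
        X ⟨0, by have := d.2; omega⟩ ⟨k - 1 - (d : ℕ), by have := d.2; omega⟩
      map_add' := fun a b => rfl
      map_smul' := fun c a => rfl } (fun a => ?_) (fun a => ?_) fun X hX => ?_
  · refine (hT _).2 fun j hj => ?_
    ext c
    have h1 : ∀ r c, c < k → extN (rowN (Matrix.of fun (j : Fin l) (c : Fin k) =>
        extN a (k - 1 - c + j)) r) c = extN a (k - 1 - c + r) := fun r c hc => by
      by_cases hr : r < l
      · rw [extN_rowN _ hr hc]
        simp
      · rw [rowN_of_le _ (not_lt.1 hr), extN_of_le a (by omega), extN_of_lt _ hc]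
        rfl
    refine .trans ?_ (vecMul_Jmat_zero _ c).symm
    refine (extN_val _ c).symm.trans ?_
    refine (h1 (j + 1) c c.2).trans (.trans ?_ (if_congr Iff.rfl rfl (h1 j (c - 1) (by omega)).symm))
    split_ifs with hc
    · exact extN_of_le _ (by omega)
    · congr 1
      omega
  · ext d
    have : k - 1 - (k - 1 - (d : ℕ)) + 0 = d := by omega
    refine .trans ?_ (extN_val a d)
    exact congrArg (extN a) this
  · have h1 := (hT X).1 hX
    have h2 := shift_eq (l := l) (k := k) (Y := fun j c => extN (rowN X j) c) (fun j hj c hc => by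
      have := congrFun (h1 j hj) ⟨c, hc⟩
      rw [vecMul_Jmat_zero] at this
      simpa [extN_of_lt _ hc] using this)
    ext j c
    have h4 := h2 j (by omega) c (by omega)
    rw [extN_rowN X j.2 c.2] at h4
    refine .trans ?_ h4.symm
    change extN _ (k - 1 - (c : ℕ) + j) = _
    by_cases hd : k - 1 - (c : ℕ) + j < min k l
    · rw [extN_of_lt _ hd, if_pos (by omega), extN_rowN X (by omega) (by omega : (c : ℕ) - j < k)]
      change X _ _ = X _ _
      congr 2
      dsimp only
      omega
    · rw [extN_of_le _ (not_lt.1 hd)]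
      split_ifs with hjc
      · have h5 := h2 l le_rfl (c - j + l) (by omega)
        rw [if_pos (by omega), rowN_of_le _ le_rfl, Nat.add_sub_cancel,
          extN_of_lt _ (by omega)] at h5
        exact h5
      · rfl

theorem nullity_E_self (l k : ℕ) (μ : ℂ) : (Eblk l μ).nullity 1 (Jmat k μ) = min k l :=
  finrank_of_mem_iff_shift _ fun X => mem_ker_E.trans <| by
    rw [show Jmat k μ - μ • (1 : Matrix (Fin k) (Fin k) ℂ) = Jmat k 0 by
      rw [Jmat_eq k μ, add_sub_cancel_left]]
    simp only [Matrix.vecMul_one, eq_comm]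

theorem nullity_EInf_self (l k : ℕ) : (EInfblk l).nullity (Jmat k 0) 1 = min k l :=
  finrank_of_mem_iff_shift _ fun X => mem_ker_EInf.trans <| by
    simp only [Matrix.vecMul_one, eq_comm]

theorem nullity_tr_of_symm {n k k' : ℕ} (P : Pencil n n)
    (h : P.tr = (P.1.submatrix Fin.revPerm Fin.revPerm, P.2.submatrix Fin.revPerm Fin.revPerm))
    (s t : Matrix (Fin k) (Fin k') ℂ) : P.tr.nullity s t = P.nullity s t := by
  rw [h]
  exact interNullity_submatrix _ _ _ _ _ _

theorem Jmat_transpose (k : ℕ) (μ : ℂ) :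
    (Jmat k μ)ᵀ = (Jmat k μ).submatrix Fin.revPerm Fin.revPerm := by
  ext i j
  simp only [Jmat, Matrix.transpose_apply, Matrix.of_apply, Matrix.submatrix_apply,
    Fin.revPerm_apply, Fin.val_rev]
  refine if_congr (by omega) rfl (if_congr (by omega) rfl rfl)

theorem nullity_tr_E {k k' : ℕ} (l : ℕ) (ν : ℂ) (s t : Matrix (Fin k) (Fin k') ℂ) :
    (Eblk l ν).tr.nullity s t = (Eblk l ν).nullity s t :=
  nullity_tr_of_symm (Eblk l ν) (Prod.ext (Jmat_transpose l ν) (by simp [Pencil.tr, Eblk])) s t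

theorem nullity_tr_EInf {k k' : ℕ} (l : ℕ) (s t : Matrix (Fin k) (Fin k') ℂ) :
    (EInfblk l).tr.nullity s t = (EInfblk l).nullity s t :=
  nullity_tr_of_symm (EInfblk l) (Prod.ext (by simp [Pencil.tr, EInfblk]) (Jmat_transpose l 0)) s t

theorem WeakRepresentsE.nullity_eq {m n k k' : ℕ} {P : Pencil m n} {r : Multiset KBlock}
    (h : WeakRepresentsE P r) (s t : Matrix (Fin k) (Fin k') ℂ) :
    P.nullity s t = (r.map fun b => b.toPencil.nullity s t).sum := by
  obtain ⟨l, hm, hn, rfl, hl⟩ := h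
  rw [← hl.nullity_eq, Pencil.nullity_cast, Pencil.nullity_pencilOfList, Multiset.map_coe,
    Multiset.sum_coe]

theorem WeakRepresentsE.nullity_tr_eq {m n k k' : ℕ} {P : Pencil m n} {r : Multiset KBlock}
    (h : WeakRepresentsE P r) (s t : Matrix (Fin k) (Fin k') ℂ) :
    P.tr.nullity s t = (r.map fun b => b.toPencil.tr.nullity s t).sum := by
  obtain ⟨l, hm, hn, rfl, hl⟩ := h
  rw [← hl.tr.nullity_eq, Pencil.tr_cast, Pencil.nullity_cast, Pencil.nullity_tr_pencilOfList,
    Multiset.map_coe, Multiset.sum_coe]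

theorem WeakRepresentsE.rows_eq {m n : ℕ} {P : Pencil m n} {r : Multiset KBlock}
    (h : WeakRepresentsE P r) : m = (r.map KBlock.rows).sum := by
  obtain ⟨l, rfl, hn, rfl, hl⟩ := h
  clear hl hn P
  induction l with
  | nil => rfl
  | cons b l ih => simpa [rowsSum] using ih

theorem WeakRepresentsE.cols_eq {m n : ℕ} {P : Pencil m n} {r : Multiset KBlock}
    (h : WeakRepresentsE P r) : n = (r.map KBlock.cols).sum := by
  obtain ⟨l, hm, rfl, rfl, hl⟩ := h
  clear hl hm P
  induction l with
  | nil => rfl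
  | cons b l ih => simpa [colsSum] using ih

theorem cons_assemble {F : Finset (Option ℂ)} (x : Bool → Multiset ℕ)
    (e : Option ℂ → Multiset ℕ) {μ : Option ℂ} (hμ : μ ∈ F) (k : ℕ) :
    Eb μ k ::ₘ assemble F x e = assemble F x (Function.update e μ (k ::ₘ e μ)) := by
  obtain ⟨rest, h⟩ := exists_assemble_update F x e true hμ
  have h1 := h (x true) (e μ)
  have h2 := h (x true) (k ::ₘ e μ)
  rw [Function.update_eq_self] at h1 h2
  rw [Function.update_eq_self] at h1
  rw [h1, h2, Multiset.map_cons, Multiset.add_cons, Multiset.cons_add]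

theorem exists_eq_assemble (s : Multiset KBlock) :
    ∃ (F₀ : Finset (Option ℂ)) (x : Bool → Multiset ℕ) (e : Option ℂ → Multiset ℕ),
      ∀ F, F₀ ⊆ F → s = assemble F x e := by
  induction s using Multiset.induction with
  | empty => exact ⟨∅, fun _ => 0, fun _ => 0, fun F _ => by simp [assemble]⟩
  | cons b s ih =>
    obtain ⟨F₀, x, e, h⟩ := ih
    have hE : ∀ μ k, ∃ (F₀ : Finset (Option ℂ)) (x : Bool → Multiset ℕ)
        (e : Option ℂ → Multiset ℕ), ∀ F, F₀ ⊆ F → Eb μ k ::ₘ s = assemble F x e := fun μ k => by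
      classical
      refine ⟨insert μ F₀, x, Function.update e μ (k ::ₘ e μ), fun F hF => ?_⟩
      rw [h F fun a ha => hF (Finset.mem_insert_of_mem ha)]
      exact cons_assemble x e (hF (Finset.mem_insert_self _ _)) k
    rcases b with ⟨k, μ⟩ | k | p | p
    · exact hE (some μ) k
    · exact hE none k
    · refine ⟨F₀, fun b => if b then p ::ₘ x true else x false, e, fun F hF => ?_⟩
      rw [h F hF]
      simp [assemble, Lb]
    · refine ⟨F₀, fun b => if b then x true else p ::ₘ x false, e, fun F hF => ?_⟩
      rw [h F hF]
      simp [assemble, Lb]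

theorem sum_map_assemble (F : Finset (Option ℂ)) (x : Bool → Multiset ℕ)
    (e : Option ℂ → Multiset ℕ) (f : KBlock → ℕ) :
    ((assemble F x e).map f).sum =
      ((x true).map fun p => f (KBlock.L p)).sum + ((x false).map fun p => f (KBlock.LT p)).sum +
        ∑ μ ∈ F, ((e μ).map fun k => f (Eb μ k)).sum := by
  have hsum : (Multiset.map f (∑ μ ∈ F, (e μ).map (Eb μ))).sum =
      ∑ μ ∈ F, ((e μ).map fun k => f (Eb μ k)).sum := by
    induction F using Finset.cons_induction with
    | empty => simp
    | cons μ F hμ ih =>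
      rw [Finset.sum_cons, Finset.sum_cons, Multiset.map_add, Multiset.sum_add, ih,
        Multiset.map_map]
      rfl
  rw [assemble, Multiset.map_add, Multiset.map_add, Multiset.sum_add, Multiset.sum_add, hsum]
  simp [Function.comp_def, Lb]

/-- The matrices of the test pencil of size `k` with single eigenvalue `μ`. -/
def testPair (k : ℕ) : Option ℂ → Matrix (Fin k) (Fin k) ℂ × Matrix (Fin k) (Fin k) ℂ
  | some μ => (1, Jmat k μ)
  | none => (Jmat k 0, 1)

theorem nullity_Eb_testPair (μ ν : Option ℂ) (k l : ℕ) :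
    (Eb ν l).toPencil.nullity (testPair k μ).1 (testPair k μ).2 = if ν = μ then min k l else 0 := by
  split_ifs with h
  · subst h
    rcases ν with _ | ν
    · exact nullity_EInf_self l k
    · exact nullity_E_self l k ν
  · rcases μ with _ | μ <;> rcases ν with _ | ν
    · exact absurd rfl h
    · refine nullity_E_eq_zero ?_ l
      have := LeftInj.add_smul_Jmat (k := k) one_ne_zero (-ν)
      rwa [one_smul, neg_smul, ← sub_eq_add_neg] at this
    · exact nullity_EInf_eq_zero LeftInj.one l
    · refine nullity_E_eq_zero ?_ l
      have h1 : μ - ν ≠ 0 := fun h1 => h (by rw [sub_eq_zero.1 h1])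
      have := LeftInj.add_smul_Jmat (k := k) h1 1
      have h2 : (testPair k (some μ)).2 - ν • (testPair k (some μ)).1 =
          (μ - ν) • 1 + (1 : ℂ) • Jmat k 0 := by
        change Jmat k μ - ν • 1 = _
        rw [Jmat_eq k μ, sub_smul, one_smul]
        abel
      rwa [h2]

theorem nullity_LT_testPair (μ : Option ℂ) (k p : ℕ) :
    (LTblk p).nullity (testPair k μ).1 (testPair k μ).2 = 0 := by
  rcases μ with _ | μ
  · exact nullity_LT_eq_zero' LeftInj.one p
  · exact nullity_LT_eq_zero LeftInj.one p

theorem nullity_L_testPair (μ : Option ℂ) (k p : ℕ) :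
    (Lblk p).nullity (testPair k μ).1 (testPair k μ).2 = k := by
  rcases μ with _ | μ
  · exact nullity_L_one_right p _
  · exact nullity_L_one_left p _

theorem nullity_Eb_L (ν : Option ℂ) (l i : ℕ) :
    (Eb ν l).toPencil.nullity (Gmat i) (Fmat i) = 0 := by
  rcases ν with _ | ν
  · exact nullity_EInf_eq_zero (LeftInj.Gmat i) l
  · exact nullity_E_eq_zero (LeftInj.Fmat_sub i ν) l

theorem nullity_tr_Eb {k k' : ℕ} (ν : Option ℂ) (l : ℕ) (s t : Matrix (Fin k) (Fin k') ℂ) :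
    (Eb ν l).toPencil.tr.nullity s t = (Eb ν l).toPencil.nullity s t := by
  rcases ν with _ | ν
  · exact nullity_tr_EInf l s t
  · exact nullity_tr_E l ν s t

section Assemble

variable {m n : ℕ} {P : Pencil m n} {F : Finset (Option ℂ)} {x : Bool → Multiset ℕ}
  {e : Option ℂ → Multiset ℕ} (h : WeakRepresentsE P (assemble F x e))

include h

theorem WeakRepresentsE.capSum_true (i : ℕ) :
    P.nullity (Gmat i) (Fmat i) = capSum (x true) i := by
  rw [h.nullity_eq, sum_map_assemble]
  have h1 : ∀ p, (KBlock.L p).toPencil.nullity (Gmat i) (Fmat i) = i - p :=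
    fun p => nullity_L_L p i
  have h2 : ∀ p, (KBlock.LT p).toPencil.nullity (Gmat i) (Fmat i) = 0 :=
    fun p => nullity_LT_eq_zero (LeftInj.Gmat i) p
  simp [h1, h2, nullity_Eb_L, capSum]

theorem WeakRepresentsE.capSum_false (i : ℕ) :
    P.tr.nullity (Gmat i) (Fmat i) = capSum (x false) i := by
  rw [h.nullity_tr_eq, sum_map_assemble]
  have h1 : ∀ p, (KBlock.LT p).toPencil.tr.nullity (Gmat i) (Fmat i) = i - p :=
    fun p => nullity_L_L p i
  have h2 : ∀ p, (KBlock.L p).toPencil.tr.nullity (Gmat i) (Fmat i) = 0 :=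
    fun p => nullity_LT_eq_zero (LeftInj.Gmat i) p
  simp [h1, h2, nullity_tr_Eb, nullity_Eb_L, capSum]

theorem WeakRepresentsE.minSum_eq {μ : Option ℂ} (hμ : μ ∈ F) (k : ℕ) :
    P.nullity (testPair k μ).1 (testPair k μ).2 = minSum (e μ) k + k * (x true).card := by
  rw [h.nullity_eq, sum_map_assemble]
  have h1 : ∀ p, (KBlock.L p).toPencil.nullity (testPair k μ).1 (testPair k μ).2 = k :=
    fun p => nullity_L_testPair μ k p
  have h2 : ∀ p, (KBlock.LT p).toPencil.nullity (testPair k μ).1 (testPair k μ).2 = 0 :=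
    fun p => nullity_LT_testPair μ k p
  simp only [h1, h2, nullity_Eb_testPair]
  rw [Finset.sum_eq_single_of_mem μ hμ fun ν _ hν => by simp [hν]]
  simp [minSum, mul_comm, add_comm]

theorem WeakRepresentsE.rows_assemble :
    m = (x true).sum + ((x false).sum + (x false).card) + ∑ μ ∈ F, (e μ).sum := by
  have h1 : ∀ μ k, (Eb μ k).rows = k := fun μ k => by cases μ <;> rfl
  rw [h.rows_eq, sum_map_assemble]
  have h2 : ∀ p, (KBlock.L p).rows = p := fun p => rfl
  have h3 : ∀ p, (KBlock.LT p).rows = p + 1 := fun p => rfl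
  simp [h1, h2, h3, Multiset.sum_map_add]

theorem WeakRepresentsE.cols_assemble :
    n = ((x true).sum + (x true).card) + (x false).sum + ∑ μ ∈ F, (e μ).sum := by
  have h1 : ∀ μ k, (Eb μ k).cols = k := fun μ k => by cases μ <;> rfl
  rw [h.cols_eq, sum_map_assemble]
  have h2 : ∀ p, (KBlock.L p).cols = p + 1 := fun p => rfl
  have h3 : ∀ p, (KBlock.LT p).cols = p := fun p => rfl
  simp [h1, h2, h3, Multiset.sum_map_add]

end Assemble

theorem degen_of_mem_closure_orbE {m n : ℕ} {P Q : Pencil m n} {s t : Multiset KBlock}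
    (hs : WeakRepresentsE P s) (ht : WeakRepresentsE Q t) (h : Q ∈ closure (Pencil.orbE P)) :
    Degen s t := by
  classical
  obtain ⟨F₁, x, e, h1⟩ := exists_eq_assemble s
  obtain ⟨F₂, y, d, h2⟩ := exists_eq_assemble t
  rw [h1 (F₁ ∪ F₂) Finset.subset_union_left] at hs ⊢
  rw [h2 (F₁ ∪ F₂) Finset.subset_union_right] at ht ⊢
  have hcap : ∀ b i, capSum (x b) i ≤ capSum (y b) i := by
    rintro (_ | _) i
    · rw [← hs.capSum_false, ← ht.capSum_false]
      exact Pencil.nullity_le_of_mem_closure (Pencil.tr_mem_closure h) _ _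
    · rw [← hs.capSum_true, ← ht.capSum_true]
      exact Pencil.nullity_le_of_mem_closure h _ _
  have hr := hs.rows_assemble.symm.trans ht.rows_assemble
  have hc := hs.cols_assemble.symm.trans ht.cols_assemble
  refine Dominates.degen ⟨hcap, fun μ hμ k => ?_, ?_, ?_⟩ ?_
  · rw [← hs.minSum_eq hμ, ← ht.minSum_eq hμ]
    exact Pencil.nullity_le_of_mem_closure h _ _
  · omega
  · omega
  · by_contra! hlt
    obtain ⟨i, hi⟩ : ∃ i, i = (x true).sum + (y true).sum + 1 := ⟨_, rfl⟩
    have h3 := hcap true i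
    have h4 := capSum_add_sum_of_sum_le (x true) i (by omega)
    have h5 := capSum_add_sum_of_sum_le (y true) i (by omega)
    have h6 := Nat.mul_le_mul_right i (Nat.succ_le_of_lt hlt)
    rw [Nat.succ_mul] at h6
    omega

section Chains

variable {V W : Type*} [AddCommGroup V] [Module ℂ V] [AddCommGroup W] [Module ℂ W]

open Module (Dual finrank)

/-- The map sending a sequence `v` to the first `p` terms of `A v₀, A v₁ - B v₀, A v₂ - B v₁, …`. -/
def shiftMap (A B : V →ₗ[ℂ] W) (p : ℕ) : (ℕ → V) →ₗ[ℂ] (Fin p → W) where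
  toFun v i := A (v i) - B (if (i : ℕ) = 0 then 0 else v (i - 1))
  map_add' v w := by
    ext i
    simp only [Pi.add_apply]
    split_ifs <;> simp only [map_add, map_zero] <;> abel
  map_smul' c v := by
    ext i
    by_cases h : (i : ℕ) = 0 <;> simp [h, smul_sub]

theorem shiftMap_eq_single_iff {A B : V →ₗ[ℂ] W} {p : ℕ} (hp : 0 < p) {v : ℕ → V} {w : W} :
    shiftMap A B p v = Pi.single ⟨0, hp⟩ w ↔
      A (v 0) = w ∧ ∀ i, i + 1 < p → A (v (i + 1)) = B (v i) := by
  constructor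
  · refine fun h => ⟨?_, fun i hi => ?_⟩
    · simpa [shiftMap] using congrFun h ⟨0, hp⟩
    · have := congrFun h ⟨i + 1, hi⟩
      rw [Pi.single_eq_of_ne (by simp)] at this
      simpa [shiftMap, sub_eq_zero] using this
  · rintro ⟨h0, h⟩
    ext ⟨i, hi⟩
    rcases i with _ | i
    · simpa [shiftMap] using h0
    · rw [Pi.single_eq_of_ne (by simp)]
      simpa [shiftMap, sub_eq_zero] using h i hi

/-- A singular chain of length `p`. -/
def IsLChain (A B : V →ₗ[ℂ] W) (p : ℕ) (x : ℕ → V) : Prop :=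
  x 0 ≠ 0 ∧ A (x 0) = 0 ∧ (∀ t, A (x (t + 1)) = B (x t)) ∧ ∀ t, p < t → x t = 0

/-- The zero extension of a finite sequence as a linear map. -/
def extLin (V : Type*) [AddCommGroup V] [Module ℂ V] (q : ℕ) : (Fin q → V) →ₗ[ℂ] (ℕ → V) where
  toFun := extN
  map_add' f g := funext (extN_add f g)
  map_smul' a f := funext (extN_smul a f)

theorem exists_isLChain_of_finrank_lt [FiniteDimensional ℂ V] [FiniteDimensional ℂ W]
    (A B : V →ₗ[ℂ] W) (h : finrank ℂ W < finrank ℂ V) : ∃ p x, IsLChain A B p x := by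
  classical
  set w := finrank ℂ W with hw
  have hker : LinearMap.ker ((shiftMap A B (w + 2)).comp (extLin V (w + 1))) ≠ ⊥ := by
    apply LinearMap.ker_ne_bot_of_finrank_lt
    rw [Module.finrank_pi_fintype, Module.finrank_pi_fintype]
    simp only [Finset.sum_const, Finset.card_univ, Fintype.card_fin, smul_eq_mul, ← hw]
    nlinarith
  obtain ⟨f, hf, hf0⟩ := Submodule.exists_mem_ne_zero_of_ne_bot hker
  set v : ℕ → V := extN f with hv
  have h1 : shiftMap A B (w + 2) v = Pi.single ⟨0, by omega⟩ 0 := by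
    rw [Pi.single_zero]
    exact hf
  obtain ⟨h2, h3⟩ := (shiftMap_eq_single_iff _).1 h1
  have h4 : ∀ t, w + 1 ≤ t → v t = 0 := fun t ht => extN_of_le f ht
  have h5 : ∀ t, A (v (t + 1)) = B (v t) := fun t => by
    by_cases ht : t + 1 < w + 2
    · exact h3 t ht
    · rw [h4 (t + 1) (by omega), h4 t (by omega), map_zero, map_zero]
  have hex : ∃ i, v i ≠ 0 := by
    by_contra! hall
    exact hf0 (eq_zero_of_extN hall)
  refine ⟨w, fun t => v (Nat.find hex + t), Nat.find_spec hex, ?_, fun t => h5 _,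
    fun t ht => h4 _ (by omega)⟩
  rcases hi : Nat.find hex with _ | i
  · exact h2
  · have := not_not.1 (Nat.find_min hex (m := i) (by omega))
    change A (v (i + 1)) = 0
    rw [h5, this, map_zero]

/-- No subspace is mapped by `A` and `B` into a subspace of smaller dimension. -/
def NoLChain (A B : V →ₗ[ℂ] W) : Prop :=
  ∀ U : Submodule ℂ V, finrank ℂ U ≤ finrank ℂ (U.map A ⊔ U.map B : Submodule ℂ W)

theorem exists_isLChain_of_not_noLChain [FiniteDimensional ℂ V] [FiniteDimensional ℂ W]
    {A B : V →ₗ[ℂ] W} (h : ¬ NoLChain A B) : ∃ p x, IsLChain A B p x := by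
  simp only [NoLChain, not_forall, not_le] at h
  obtain ⟨U, hU⟩ := h
  obtain ⟨p, x, h0, h1, h2, h3⟩ := exists_isLChain_of_finrank_lt
    (A.restrict (p := U) (q := U.map A ⊔ U.map B)
      fun u hu => Submodule.mem_sup_left (Submodule.mem_map_of_mem hu))
    (B.restrict (p := U) (q := U.map A ⊔ U.map B)
      fun u hu => Submodule.mem_sup_right (Submodule.mem_map_of_mem hu)) hU
  refine ⟨p, fun t => x t, by simpa using h0, congrArg Subtype.val h1,
    fun t => congrArg Subtype.val (h2 t), fun t ht => by simp [h3 t ht]⟩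

theorem exists_dual_sequence (A B : V →ₗ[ℂ] W) {p q : ℕ} (hp : 0 < p) (hq : q ≤ p) (w : W)
    (h : ¬ ∃ v : ℕ → V, (∀ i, q ≤ i → v i = 0) ∧ A (v 0) = w ∧
      ∀ i, i + 1 < p → A (v (i + 1)) = B (v i)) :
    ∃ η : ℕ → Dual ℂ W, (∀ i, p ≤ i → η i = 0) ∧ η 0 w ≠ 0 ∧
      ∀ i, i < q → ∀ v, η i (A v) = η (i + 1) (B v) := by
  classical
  let D : Submodule ℂ (ℕ → V) :=
    { carrier := {v | ∀ i, q ≤ i → v i = 0}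
      add_mem' := fun {a b} ha hb i hi => by simp [ha i hi, hb i hi]
      zero_mem' := fun _ _ => rfl
      smul_mem' := fun c a ha i hi => by simp [ha i hi] }
  have hnot : Pi.single (⟨0, hp⟩ : Fin p) w ∉ D.map (shiftMap A B p) := by
    rintro ⟨v, hv, hvw⟩
    exact h ⟨v, hv, (shiftMap_eq_single_iff hp).1 hvw⟩
  obtain ⟨Φ, h1, h2⟩ := Submodule.exists_le_ker_of_notMem hnot
  refine ⟨fun i => if hi : i < p then Φ.comp (LinearMap.single ℂ (fun _ => W) ⟨i, hi⟩) else 0,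
    fun i hi => dif_neg (by omega), by simpa [hp] using h1, fun i hi v => ?_⟩
  have hD : (Pi.single i v : ℕ → V) ∈ D := fun j hj => Pi.single_eq_of_ne (by omega) _
  have h3 : Φ (shiftMap A B p (Pi.single i v)) = 0 := h2 (Submodule.mem_map_of_mem hD)
  have hip : i < p := by omega
  by_cases hi' : i + 1 < p
  · have h4 : shiftMap A B p (Pi.single i v) =
        Pi.single (⟨i, hip⟩ : Fin p) (A v) - Pi.single (⟨i + 1, hi'⟩ : Fin p) (B v) := by
      ext ⟨j, hj⟩
      simp only [shiftMap, LinearMap.coe_mk, AddHom.coe_mk, Pi.sub_apply, Pi.single_apply,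
        Fin.mk.injEq]
      rcases j with _ | j
      · by_cases h0 : 0 = i
        · subst h0
          simp
        · simp [h0]
      · by_cases h0 : j + 1 = i
        · subst h0
          simp
        · by_cases h5 : j = i
          · subst h5
            simp
          · simp [h0, h5]
    rw [h4, map_sub, sub_eq_zero] at h3
    simpa [hip, hi'] using h3
  · have h4 : shiftMap A B p (Pi.single i v) = Pi.single (⟨i, hip⟩ : Fin p) (A v) := by
      ext ⟨j, hj⟩
      simp only [shiftMap, LinearMap.coe_mk, AddHom.coe_mk, Pi.single_apply, Fin.mk.injEq]
      have h6 : (if j = 0 then 0 else if j - 1 = i then v else 0) = 0 := by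
        split_ifs <;> first | rfl | omega
      rw [h6, map_zero, sub_zero]
      split_ifs <;> simp
    rw [h4] at h3
    simpa [hip, hi'] using h3

theorem isUnit_of_toeplitz {n : ℕ} {a : ℕ → ℕ → ℂ} (h0 : a 0 0 ≠ 0)
    (h1 : ∀ i, i + 1 < n → a (i + 1) 0 = 0)
    (h2 : ∀ i j, i + 1 < n → j + 1 < n → a (i + 1) (j + 1) = a i j) :
    IsUnit (Matrix.of fun i j : Fin n => a i j) := by
  have hdiag : ∀ i, i < n → a i i = a 0 0 := fun i => by
    induction i with
    | zero => exact fun _ => rfl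
    | succ i ih => exact fun hi => (h2 i i hi hi).trans (ih (by omega))
  have hlow : ∀ j i, i < n → j < i → a i j = 0 := fun j => by
    induction j with
    | zero =>
      rintro (_ | i) hi hij
      · omega
      · exact h1 i hi
    | succ j ih =>
      rintro (_ | i) hi hij
      · omega
      · rw [h2 i j hi (by omega), ih i (by omega) (by omega)]
  rw [Matrix.isUnit_iff_isUnit_det, Matrix.det_of_isUpperTriangular, isUnit_iff_ne_zero,
    Finset.prod_ne_zero_iff]
  · exact fun i _ => (hdiag i i.2).trans_ne h0
  · exact fun i j hij => hlow j i i.2 hij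

theorem finrank_map_lt [FiniteDimensional ℂ V] (C : V →ₗ[ℂ] W) {U : Submodule ℂ V} {x : V}
    (hx : x ∈ U) (h0 : x ≠ 0) (hC : C x = 0) : finrank ℂ (U.map C) < finrank ℂ U := by
  have h1 := (C.domRestrict U).finrank_range_add_finrank_ker
  rw [LinearMap.range_domRestrict] at h1
  have h2 : 0 < finrank ℂ (LinearMap.ker (C.domRestrict U)) := by
    rw [Module.finrank_pos_iff_exists_ne_zero]
    exact ⟨⟨⟨x, hx⟩, hC⟩, fun h => h0 (congrArg Subtype.val (congrArg Subtype.val h))⟩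
  omega

/-- A Jordan chain of length `k` for the eigenvalue zero. -/
def IsEChain (C B : V →ₗ[ℂ] W) (k : ℕ) (x : ℕ → V) : Prop :=
  x 0 ≠ 0 ∧ C (x 0) = 0 ∧ ∀ t, t + 1 < k → C (x (t + 1)) = B (x t)

theorem IsEChain.le_finrank [FiniteDimensional ℂ V] [FiniteDimensional ℂ W] {C B : V →ₗ[ℂ] W}
    (h : NoLChain C B) {k : ℕ} {x : ℕ → V} (hx : IsEChain C B k x) : k ≤ finrank ℂ V := by
  obtain ⟨h0, h1, h2⟩ := hx
  have key : ∀ j, j ≤ k → j ≤ finrank ℂ (Submodule.span ℂ (x '' Set.Iio j)) := fun j => by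
    induction j with
    | zero => exact fun _ => Nat.zero_le _
    | succ j ih =>
      intro hj
      have hle : (Submodule.span ℂ (x '' Set.Iio j)).map C ⊔
          (Submodule.span ℂ (x '' Set.Iio j)).map B ≤
          (Submodule.span ℂ (x '' Set.Iio (j + 1))).map C := by
        refine sup_le (Submodule.map_mono (Submodule.span_mono
          (Set.image_mono (Set.Iio_subset_Iio (by omega))))) ?_
        rw [Submodule.map_span, Submodule.span_le]
        rintro _ ⟨_, ⟨i, hi, rfl⟩, rfl⟩
        have hi' : i < j := hi
        rw [← h2 i (by omega)]
        exact Submodule.mem_map_of_mem (Submodule.subset_span ⟨i + 1, by simpa using hi', rfl⟩)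
      have h3 := (ih (by omega)).trans ((h _).trans (Submodule.finrank_mono hle))
      have h4 := finrank_map_lt C (U := Submodule.span ℂ (x '' Set.Iio (j + 1)))
        (Submodule.subset_span ⟨0, by simp, rfl⟩) h0 h1
      omega
  exact (key k le_rfl).trans (Submodule.finrank_le _)

theorem exists_maximal_isEChain [FiniteDimensional ℂ V] [FiniteDimensional ℂ W]
    {C B : V →ₗ[ℂ] W} (h : NoLChain C B) {v : V} (hv : v ≠ 0) (hC : C v = 0) :
    ∃ k x, IsEChain C B (k + 1) x ∧ ∀ y, ¬ IsEChain C B (k + 2) y := by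
  by_contra! hcon
  have key : ∀ k, ∃ x, IsEChain C B (k + 1) x := fun k => by
    induction k with
    | zero => exact ⟨fun _ => v, hv, hC, fun t ht => by omega⟩
    | succ k ih =>
      obtain ⟨x, hx⟩ := ih
      exact hcon k x hx
  obtain ⟨x, hx⟩ := key (finrank ℂ V)
  have := hx.le_finrank h
  omega

end Chains

section Splits

variable {V W : Type*} [AddCommGroup V] [Module ℂ V] [AddCommGroup W] [Module ℂ W]

open Module (Dual finrank)

/-- The pencil `M` of matrices is a direct summand of the pencil `A - λ B` of linear maps: there
are morphisms from `M` and to `M` whose compositions are invertible. -/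
def Splits {m n : ℕ} (A B : V →ₗ[ℂ] W) (M : Pencil m n) : Prop :=
  ∃ (x : Fin n → V) (y : Fin m → W) (ξ : Fin n → Dual ℂ V) (η : Fin m → Dual ℂ W),
    ((∀ j, A (x j) = ∑ i, M.1 i j • y i) ∧ ∀ j, B (x j) = ∑ i, M.2 i j • y i) ∧
    ((∀ i v, η i (A v) = ∑ j, M.1 i j * ξ j v) ∧ ∀ i v, η i (B v) = ∑ j, M.2 i j * ξ j v) ∧
    IsUnit (Matrix.of fun i j => ξ i (x j)) ∧ IsUnit (Matrix.of fun i j => η i (y j))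

theorem Splits.swap {m n : ℕ} {A B : V →ₗ[ℂ] W} {M : Pencil m n} (h : Splits A B M) :
    Splits B A (M.2, M.1) := by
  obtain ⟨x, y, ξ, η, h1, h2, h3⟩ := h
  exact ⟨x, y, ξ, η, h1.symm, h2.symm, h3⟩

theorem Splits.of_dual [FiniteDimensional ℂ V] [FiniteDimensional ℂ W] {m n : ℕ}
    {A B : V →ₗ[ℂ] W} {M : Pencil m n} (h : Splits A.dualMap B.dualMap M) : Splits A B M.tr := by
  obtain ⟨x, y, ξ, η, h1, h2, h3, h4⟩ := h
  have hξ : ∀ (j : Fin n) (φ : Dual ℂ W), φ ((Module.evalEquiv ℂ W).symm (ξ j)) = ξ j φ :=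
    fun j φ => Module.apply_evalEquiv_symm_apply ℂ W φ (ξ j)
  have hη : ∀ (j : Fin m) (φ : Dual ℂ V), φ ((Module.evalEquiv ℂ V).symm (η j)) = η j φ :=
    fun j φ => Module.apply_evalEquiv_symm_apply ℂ V φ (η j)
  refine ⟨fun i => (Module.evalEquiv ℂ V).symm (η i), fun j => (Module.evalEquiv ℂ W).symm (ξ j),
    y, x, ⟨fun i => ?_, fun i => ?_⟩, ⟨fun j v => ?_, fun j v => ?_⟩, ?_, ?_⟩
  · refine (Module.evalEquiv ℂ W).injective (LinearMap.ext fun φ => ?_)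
    change φ (A ((Module.evalEquiv ℂ V).symm (η i))) =
      φ (∑ j, M.1 i j • (Module.evalEquiv ℂ W).symm (ξ j))
    rw [← LinearMap.dualMap_apply, hη, h2.1]
    simp [hξ]
  · refine (Module.evalEquiv ℂ W).injective (LinearMap.ext fun φ => ?_)
    change φ (B ((Module.evalEquiv ℂ V).symm (η i))) =
      φ (∑ j, M.2 i j • (Module.evalEquiv ℂ W).symm (ξ j))
    rw [← LinearMap.dualMap_apply, hη, h2.2]
    simp [hξ]
  · have := LinearMap.congr_fun (h1.1 j) v
    simpa [Pencil.tr] using this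
  · have := LinearMap.congr_fun (h1.2 j) v
    simpa [Pencil.tr] using this
  · rw [← isUnit_transpose]
    convert h4 using 1
    ext i j
    exact hη _ _
  · rw [← isUnit_transpose]
    convert h3 using 1
    ext i j
    exact hξ _ _

theorem Splits.of_sub_smul {k : ℕ} {A B : V →ₗ[ℂ] W} {M : Matrix (Fin k) (Fin k) ℂ} (μ : ℂ)
    (h : Splits (A - μ • B) B (M, 1)) : Splits A B (μ • 1 + M, 1) := by
  obtain ⟨x, y, ξ, η, h1, h2, h3⟩ := h
  refine ⟨x, y, ξ, η, ⟨fun j => ?_, h1.2⟩, ⟨fun i v => ?_, h2.2⟩, h3⟩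
  · have h4 := h1.1 j
    rw [LinearMap.sub_apply, LinearMap.smul_apply, h1.2 j, sub_eq_iff_eq_add] at h4
    rw [h4, Finset.smul_sum, ← Finset.sum_add_distrib]
    exact Finset.sum_congr rfl fun i _ => by
      simp only [Matrix.add_apply, Matrix.smul_apply, smul_eq_mul, add_smul, mul_smul, add_comm]
  · have h4 := h2.1 i v
    rw [LinearMap.sub_apply, LinearMap.smul_apply, map_sub, map_smul, h2.2 i v,
      sub_eq_iff_eq_add] at h4
    rw [h4, Finset.smul_sum, ← Finset.sum_add_distrib]
    exact Finset.sum_congr rfl fun i _ => by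
      simp only [Matrix.add_apply, Matrix.smul_apply, smul_eq_mul, add_mul, mul_assoc, add_comm]

theorem sum_ite_val_smul {M : Type*} [AddCommGroup M] [Module ℂ M] (f : ℕ → M) (p c : ℕ) :
    ∑ i : Fin p, (if c = (i : ℕ) then (1 : ℂ) else 0) • f i = if c < p then f c else 0 := by
  rw [Fin.sum_univ_eq_sum_range (fun i => (if c = i then (1 : ℂ) else 0) • f i) p]
  simp [ite_smul, Finset.sum_ite_eq]

theorem sum_ite_val_succ_smul {M : Type*} [AddCommGroup M] [Module ℂ M] (f : ℕ → M) (p c : ℕ) :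
    ∑ i : Fin p, (if c = (i : ℕ) + 1 then (1 : ℂ) else 0) • f i =
      if c = 0 then 0 else if c ≤ p then f (c - 1) else 0 := by
  rcases c with _ | c
  · simp
  · simpa [Nat.succ_le_iff] using sum_ite_val_smul f p c

theorem splits_Lblk {A B : V →ₗ[ℂ] W} {p : ℕ} {x : ℕ → V} {η : ℕ → Dual ℂ W} {ξ : ℕ → Dual ℂ V}
    (hx : IsLChain A B p x) (h0 : ξ 0 (x 0) ≠ 0) (hA : ∀ i, i < p → ∀ v, η i (A v) = ξ (i + 1) v)
    (hB : ∀ i, i < p → ∀ v, η i (B v) = ξ i v) : Splits A B (Lblk p) := by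
  obtain ⟨-, hx0, hx1, hx2⟩ := hx
  have hz : ∀ i, i < p → ξ (i + 1) (x 0) = 0 := fun i hi => by
    rw [← hA i hi, hx0, map_zero]
  have hs : ∀ i j, i < p → ξ (i + 1) (x (j + 1)) = ξ i (x j) := fun i j hi => by
    rw [← hA i hi, hx1, hB i hi]
  refine ⟨fun j => x j, fun i => B (x i), fun j => ξ j, fun i => η i, ⟨fun j => ?_, fun j => ?_⟩,
    ⟨fun i v => ?_, fun i v => ?_⟩, ?_, ?_⟩
  · refine Eq.trans ?_ (sum_ite_val_succ_smul (fun i => B (x i)) p j).symm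
    rcases j with ⟨_ | j, hj⟩
    · simp [hx0]
    · simp [hx1, Nat.lt_of_succ_lt_succ hj]
  · refine Eq.trans ?_ (sum_ite_val_smul (fun i => B (x i)) p j).symm
    split_ifs with h
    · rfl
    · have hj : (j : ℕ) = p := by omega
      change B (x j) = 0
      rw [hj, ← hx1, hx2 _ (Nat.lt_succ_self p), map_zero]
  · have := sum_ite_val_smul (fun j => ξ j v) (p + 1) (i + 1)
    rw [if_pos (by omega)] at this
    rw [hA i i.2, ← this]
    simp [Lblk, Fmat, eq_comm]
  · have := sum_ite_val_smul (fun j => ξ j v) (p + 1) i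
    rw [if_pos (by omega)] at this
    rw [hB i i.2, ← this]
    simp [Lblk, Gmat, eq_comm]
  · exact isUnit_of_toeplitz (a := fun i j => ξ i (x j)) h0 (fun i hi => hz i (by omega))
      fun i j hi _ => hs i j (by omega)
  · have := isUnit_of_toeplitz (n := p) (a := fun i j => ξ i (x j)) h0
      (fun i hi => hz i (by omega)) fun i j hi _ => hs i j (by omega)
    convert this using 1
    ext i j
    exact hB i i.2 _

theorem exists_splits_Lblk {A B : V →ₗ[ℂ] W} (h : ∃ p x, IsLChain A B p x) :
    ∃ p, Splits A B (Lblk p) := by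
  classical
  obtain ⟨x, hx⟩ := Nat.find_spec h
  have hmin : ∀ q, q < Nat.find h → ∀ y, ¬ IsLChain A B q y := fun q hq y hy =>
    Nat.find_min h hq ⟨y, hy⟩
  rcases hp : Nat.find h with _ | p <;> rw [hp] at hx hmin
  · obtain ⟨ψ, hψ⟩ : ∃ ψ : Dual ℂ V, ψ (x 0) ≠ 0 := by
      by_contra! hcon
      exact hx.1 ((Module.forall_dual_apply_eq_zero_iff ℂ _).1 hcon)
    exact ⟨0, splits_Lblk (η := fun _ => 0) (ξ := fun _ => ψ) hx hψ (fun i hi => by omega)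
      fun i hi => by omega⟩
  · obtain ⟨η, -, h1, h2⟩ := exists_dual_sequence A B (p := p + 1) (q := p) (by omega) (by omega)
      (B (x 0)) (by
        rintro ⟨v, hv, hv0, hv1⟩
        refine hmin p (by omega) (fun t => Nat.casesOn t (x 0) v) ⟨hx.1, hx.2.1, ?_, ?_⟩
        · rintro (_ | t)
          · exact hv0
          · by_cases ht : t + 1 < p + 1
            · exact hv1 t ht
            · change A (v (t + 1)) = B (v t)
              rw [hv (t + 1) (by omega), hv t (by omega), map_zero, map_zero]
        · rintro (_ | t) ht
          · omega
          · exact hv t (by omega))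
    refine ⟨p + 1, splits_Lblk (η := η)
      (ξ := fun i => if i ≤ p then (η i).comp B else (η (i - 1)).comp A) hx (by simpa using h1)
      (fun i hi v => ?_) fun i hi v => ?_⟩
    · by_cases hi' : i < p
      · rw [if_pos (by omega), h2 i hi' v]
        rfl
      · rw [if_neg (by omega)]
        rfl
    · rw [if_pos (by omega)]
      rfl

theorem exists_splits_Eblk [FiniteDimensional ℂ V] [FiniteDimensional ℂ W] {C B : V →ₗ[ℂ] W}
    (h : NoLChain C B) {v : V} (hv : v ≠ 0) (hC : C v = 0) :
    ∃ k, Splits C B (Jmat (k + 1) 0, 1) := by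
  obtain ⟨k, x, ⟨hx, hx0, hx1⟩, hmax⟩ := exists_maximal_isEChain h hv hC
  obtain ⟨η, h0, h1, h2⟩ := exists_dual_sequence C B (p := k + 1) (q := k + 1) (by omega) le_rfl
    (B (x 0)) (by
      rintro ⟨v, -, hv0, hv1⟩
      refine hmax (fun t => Nat.casesOn t (x 0) v) ⟨hx, hx0, ?_⟩
      rintro (_ | t) ht
      · exact hv0
      · exact hv1 t (by omega))
  have hJ : ∀ i j : Fin (k + 1), Jmat (k + 1) 0 i j = if (j : ℕ) = i + 1 then 1 else 0 :=
    fun i j => by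
      simp only [Jmat, Matrix.of_apply]
      split_ifs <;> first | rfl | omega
  have hunit : IsUnit (Matrix.of fun i j : Fin (k + 1) => η i (B (x j))) := by
    refine isUnit_of_toeplitz (a := fun i j => η i (B (x j))) h1 (fun i hi => ?_)
      fun i j hi hj => ?_
    · rw [← h2 i (by omega), hx0, map_zero]
    · rw [← h2 i (by omega), hx1 j hj]
  refine ⟨k, fun j => x j, fun i => B (x i), fun j => (η j).comp B, fun i => η i,
    ⟨fun j => ?_, fun j => ?_⟩, ⟨fun i v => ?_, fun i v => ?_⟩, hunit, hunit⟩
  · simp only [hJ]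
    rw [sum_ite_val_succ_smul (fun i => B (x i)) (k + 1) j]
    rcases j with ⟨_ | j, hj⟩
    · simp [hx0]
    · simp [hx1 j hj, hj.le]
  · simp [Matrix.one_apply]
  · simp only [hJ]
    have := sum_ite_val_smul (fun j => (η j) (B v)) (k + 1) (i + 1)
    rw [h2 i i.2]
    have h3 : ∑ j : Fin (k + 1), (if (j : ℕ) = i + 1 then 1 else 0) * (η j) (B v) =
        if (i : ℕ) + 1 < k + 1 then η (i + 1) (B v) else 0 := by
      simpa [eq_comm] using this
    refine Eq.trans ?_ h3.symm
    split_ifs with h4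
    · rfl
    · rw [h0 _ (by omega), LinearMap.zero_apply]
  · simp [Matrix.one_apply]

theorem NoLChain.swap {A B : V →ₗ[ℂ] W} (h : NoLChain A B) : NoLChain B A := fun U => by
  rw [sup_comm]
  exact h U

theorem NoLChain.sub_smul [FiniteDimensional ℂ W] {A B : V →ₗ[ℂ] W} (h : NoLChain A B) (μ : ℂ) :
    NoLChain (A - μ • B) B := fun U => by
  refine (h U).trans (Submodule.finrank_mono (sup_le ?_ le_sup_right))
  rintro _ ⟨u, hu, rfl⟩
  have h1 : A u = (A - μ • B) u + B (μ • u) := by simp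
  rw [h1]
  exact Submodule.add_mem_sup (Submodule.mem_map_of_mem hu)
    (Submodule.mem_map_of_mem (U.smul_mem μ hu))

theorem NoLChain.finrank_le [FiniteDimensional ℂ V] [FiniteDimensional ℂ W] {A B : V →ₗ[ℂ] W}
    (h : NoLChain A B) : finrank ℂ V ≤ finrank ℂ W := by
  have := (h ⊤).trans (Submodule.finrank_le _)
  rwa [finrank_top] at this

theorem exists_splits [FiniteDimensional ℂ V] [FiniteDimensional ℂ W] (A B : V →ₗ[ℂ] W)
    (hpos : 0 < finrank ℂ V + finrank ℂ W) :
    ∃ b : KBlock, 0 < b.rows + b.cols ∧ Splits A B b.toPencil := by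
  by_cases h1 : NoLChain A B
  swap
  · obtain ⟨p, hp⟩ := exists_splits_Lblk (exists_isLChain_of_not_noLChain h1)
    exact ⟨KBlock.L p, Nat.add_pos_right _ (Nat.succ_pos p), hp⟩
  by_cases h2 : NoLChain A.dualMap B.dualMap
  swap
  · obtain ⟨p, hp⟩ := exists_splits_Lblk (exists_isLChain_of_not_noLChain h2)
    exact ⟨KBlock.LT p, Nat.add_pos_left (Nat.succ_pos p) _, hp.of_dual⟩
  have h3 := h1.finrank_le
  have h4 := h2.finrank_le
  rw [Subspace.dual_finrank_eq, Subspace.dual_finrank_eq] at h4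
  by_cases h5 : ∃ v, v ≠ 0 ∧ B v = 0
  · obtain ⟨v, hv, hB⟩ := h5
    obtain ⟨k, hk⟩ := exists_splits_Eblk h1.swap hv hB
    exact ⟨KBlock.Einf (k + 1), Nat.add_pos_left (Nat.succ_pos k) _, hk.swap⟩
  have hinj : Function.Injective B := by
    rw [← LinearMap.ker_eq_bot, LinearMap.ker_eq_bot']
    exact fun v hv => by_contra fun h => h5 ⟨v, h, hv⟩
  have : Nontrivial V := Module.nontrivial_of_finrank_pos (R := ℂ) (by omega)
  let e : V ≃ₗ[ℂ] W := LinearMap.linearEquivOfInjective B hinj (by omega)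
  obtain ⟨μ, hμ⟩ := Module.End.exists_eigenvalue ((e.symm : W →ₗ[ℂ] V) ∘ₗ A)
  obtain ⟨v, hv⟩ := hμ.exists_hasEigenvector
  have h6 : (A - μ • B) v = 0 := by
    have h7 : e.symm (A v) = μ • v := hv.apply_eq_smul
    have h8 : A v = e (μ • v) := by rw [← h7, e.apply_symm_apply]
    rw [LinearMap.sub_apply, h8, map_smul]
    exact sub_self _
  obtain ⟨k, hk⟩ := exists_splits_Eblk (h1.sub_smul μ) hv.2 h6
  refine ⟨KBlock.E (k + 1) μ, Nat.add_pos_left (Nat.succ_pos k) _, ?_⟩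
  have := hk.of_sub_smul
  rwa [← Jmat_eq] at this

end Splits

section Model

open Module (Dual finrank)

/-- The pencil `A - λ B` of linear maps is given in some bases by the matrix pencil `M`. -/
def IsModel {V W : Type*} [AddCommGroup V] [Module ℂ V] [AddCommGroup W] [Module ℂ W] {m n : ℕ}
    (A B : V →ₗ[ℂ] W) (M : Pencil m n) : Prop :=
  ∃ (e : (Fin n → ℂ) ≃ₗ[ℂ] V) (f : (Fin m → ℂ) ≃ₗ[ℂ] W),
    (∀ c, A (e c) = f (M.1 *ᵥ c)) ∧ ∀ c, B (e c) = f (M.2 *ᵥ c)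

/-- Splitting a vector of length `n + q` into two parts. -/
def splitVec (n q : ℕ) : (Fin (n + q) → ℂ) ≃ₗ[ℂ] (Fin n → ℂ) × (Fin q → ℂ) :=
  (LinearEquiv.funCongrLeft ℂ ℂ finSumFinEquiv).trans
    (LinearEquiv.sumArrowLequivProdArrow (Fin n) (Fin q) ℂ ℂ)

theorem splitVec_mulVec {m n p q : ℕ} (M : Matrix (Fin m) (Fin n) ℂ) (N : Matrix (Fin p) (Fin q) ℂ)
    (c : Fin (n + q) → ℂ) :
    splitVec m p ((fromBlocks M 0 0 N).submatrix finSumFinEquiv.symm finSumFinEquiv.symm *ᵥ c) =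
      (M *ᵥ (splitVec n q c).1, N *ᵥ (splitVec n q c).2) := by
  rw [Matrix.submatrix_mulVec_equiv, fromBlocks_mulVec]
  ext i
  · simp [splitVec, LinearEquiv.funCongrLeft, LinearMap.funLeft, Function.comp_def]
    rfl
  · simp [splitVec, LinearEquiv.funCongrLeft, LinearMap.funLeft, Function.comp_def]
    rfl

variable {V W : Type*} [AddCommGroup V] [Module ℂ V] [AddCommGroup W] [Module ℂ W]

theorem exists_prod_ker_equiv {n : ℕ} (x : Fin n → V) (ξ : Fin n → Dual ℂ V)
    (h : IsUnit (Matrix.of fun i j => ξ i (x j))) :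
    ∃ K : ((Fin n → ℂ) × LinearMap.ker (LinearMap.pi ξ)) ≃ₗ[ℂ] V,
      ∀ c u, K (c, u) = ∑ j, c j • x j + u := by
  have hval : ∀ c, LinearMap.pi ξ (∑ j, c j • x j) = (Matrix.of fun i j => ξ i (x j)) *ᵥ c :=
    fun c => by
      ext i
      simp [Matrix.mulVec, dotProduct, mul_comm]
  let F : ((Fin n → ℂ) × LinearMap.ker (LinearMap.pi ξ)) →ₗ[ℂ] V :=
    (Fintype.linearCombination ℂ x).coprod (LinearMap.ker (LinearMap.pi ξ)).subtype
  have hF : ∀ c u, F (c, u) = ∑ j, c j • x j + u := fun c u => rfl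
  refine ⟨LinearEquiv.ofBijective F ⟨?_, fun v => ?_⟩, hF⟩
  · rw [← LinearMap.ker_eq_bot, LinearMap.ker_eq_bot']
    rintro ⟨c, u⟩ hcu
    rw [hF] at hcu
    have h1 := congrArg (LinearMap.pi ξ) hcu
    rw [map_add, hval, LinearMap.mem_ker.1 u.2, add_zero, map_zero] at h1
    have h2 : c = 0 := (Matrix.mulVec_injective_iff_isUnit.2 h) (by rw [h1, mulVec_zero])
    subst h2
    simpa using hcu
  · obtain ⟨c, hc⟩ := (Matrix.mulVec_surjective_iff_isUnit.2 h) (LinearMap.pi ξ v)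
    refine ⟨(c, ⟨v - ∑ j, c j • x j, ?_⟩), ?_⟩
    · rw [LinearMap.mem_ker, map_sub, hval, hc, sub_self]
    · rw [hF]
      simp

theorem exists_isModel_of_finrank_le (N : ℕ) : ∀ (V W : Type) [AddCommGroup V] [Module ℂ V]
    [AddCommGroup W] [Module ℂ W] [FiniteDimensional ℂ V] [FiniteDimensional ℂ W]
    (A B : V →ₗ[ℂ] W), finrank ℂ V + finrank ℂ W ≤ N → ∃ l, IsModel A B (pencilOfList l) := by
  induction N with
  | zero =>
    intro V W _ _ _ _ _ _ A B h
    refine ⟨[], LinearEquiv.ofFinrankEq _ _ ?_, LinearEquiv.ofFinrankEq _ _ ?_, fun c => ?_,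
      fun c => ?_⟩
    · rw [Module.finrank_fin_fun]
      exact (Nat.eq_zero_of_add_eq_zero_right (Nat.le_zero.1 h)).symm
    · rw [Module.finrank_fin_fun]
      exact (Nat.eq_zero_of_add_eq_zero_left (Nat.le_zero.1 h)).symm
    all_goals
      have : Subsingleton W := Module.finrank_zero_iff (R := ℂ).1 (by omega)
      exact Subsingleton.elim _ _
  | succ N ih =>
    intro V W _ _ _ _ _ _ A B h
    by_cases hpos : 0 < finrank ℂ V + finrank ℂ W
    swap
    · exact ih V W A B (by omega)
    obtain ⟨b, hb, x, y, ξ, η, ⟨hA, hB⟩, ⟨hA', hB'⟩, h1, h2⟩ := exists_splits A B hpos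
    obtain ⟨K, hK⟩ := exists_prod_ker_equiv x ξ h1
    obtain ⟨K', hK'⟩ := exists_prod_ker_equiv y η h2
    have hd := K.finrank_eq
    have hd' := K'.finrank_eq
    rw [Module.finrank_prod, Module.finrank_fin_fun] at hd hd'
    have hrestr : ∀ {A : V →ₗ[ℂ] W} {M : Matrix (Fin b.rows) (Fin b.cols) ℂ},
        (∀ i v, η i (A v) = ∑ j, M i j * ξ j v) →
        ∀ u ∈ LinearMap.ker (LinearMap.pi ξ), A u ∈ LinearMap.ker (LinearMap.pi η) := by
      intro A M hM u hu
      rw [LinearMap.mem_ker] at hu ⊢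
      ext i
      have hu' : ∀ j, ξ j u = 0 := fun j => congrFun hu j
      simp [hM, hu']
    obtain ⟨l, e, f, h3, h4⟩ := ih (LinearMap.ker (LinearMap.pi ξ)) (LinearMap.ker (LinearMap.pi η))
      (A.restrict (hrestr hA')) (B.restrict (hrestr hB')) (by omega)
    have key : ∀ {A : V →ₗ[ℂ] W} {M : Matrix (Fin b.rows) (Fin b.cols) ℂ}
        {N : Matrix (Fin (rowsSum l)) (Fin (colsSum l)) ℂ} (_ : ∀ j, A (x j) = ∑ i, M i j • y i)
        (_ : ∀ c, A (e c) = f (N *ᵥ c)) (c : Fin (b.cols + colsSum l) → ℂ),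
        A (K ((LinearEquiv.refl ℂ _).prodCongr e (splitVec _ _ c))) =
          K' ((LinearEquiv.refl ℂ _).prodCongr f (splitVec _ _ ((fromBlocks M 0 0 N).submatrix
            finSumFinEquiv.symm finSumFinEquiv.symm *ᵥ c))) := by
      intro A M N hM hN c
      rw [splitVec_mulVec]
      obtain ⟨a, d⟩ := splitVec _ _ c
      simp only [LinearEquiv.prodCongr_apply, LinearEquiv.refl_apply, hK, hK', map_add, hN, map_sum,
        map_smul, hM]
      congr 1
      simp only [Matrix.mulVec, dotProduct, Finset.smul_sum, Finset.sum_smul, smul_smul]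
      rw [Finset.sum_comm]
      simp only [mul_comm]
    exact ⟨b :: l, (splitVec _ _).trans (((LinearEquiv.refl ℂ _).prodCongr e).trans K),
      (splitVec _ _).trans (((LinearEquiv.refl ℂ _).prodCongr f).trans K'),
      key hA fun c => congrArg Subtype.val (h3 c), key hB fun c => congrArg Subtype.val (h4 c)⟩

theorem isUnit_toMatrix' {k : ℕ} (f : (Fin k → ℂ) ≃ₗ[ℂ] (Fin k → ℂ)) :
    IsUnit (LinearMap.toMatrix' f.toLinearMap) := by
  refine IsUnit.of_mul_eq_one (LinearMap.toMatrix' f.symm.toLinearMap) ?_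
  rw [← LinearMap.toMatrix'_comp]
  simp

theorem IsModel.strictEquiv {m n m' n' : ℕ} {P : Pencil m n} {M : Pencil m' n'}
    (h : IsModel P.1.mulVecLin P.2.mulVecLin M) :
    ∃ (hm : m' = m) (hn : n' = n), Pencil.StrictEquiv (Pencil.cast hm hn M) P := by
  obtain ⟨e, f, h1, h2⟩ := h
  obtain rfl : m' = m := by simpa using f.finrank_eq
  obtain rfl : n' = n := by simpa using e.finrank_eq
  have hunit := isUnit_toMatrix' f
  have hmul : ∀ {X Y : Matrix (Fin m') (Fin n') ℂ}, (∀ c, X.mulVecLin (e c) = f (Y *ᵥ c)) →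
      (LinearMap.toMatrix' f.toLinearMap)⁻¹⁻¹ * Y * LinearMap.toMatrix' e.symm.toLinearMap = X := by
    intro X Y hXY
    rw [Matrix.nonsing_inv_nonsing_inv _ ((Matrix.isUnit_iff_isUnit_det _).1 hunit)]
    have hX : X.mulVecLin = f.toLinearMap ∘ₗ Y.mulVecLin ∘ₗ e.symm.toLinearMap :=
      LinearMap.ext fun c => by simpa using hXY (e.symm c)
    rw [← LinearMap.toMatrix'_toLin' X, Matrix.toLin'_apply', hX, LinearMap.toMatrix'_comp, LinearMap.toMatrix'_comp,
      ← Matrix.toLin'_apply', LinearMap.toMatrix'_toLin', Matrix.mul_assoc]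
  exact ⟨rfl, rfl, (LinearMap.toMatrix' f.toLinearMap)⁻¹, LinearMap.toMatrix' e.symm.toLinearMap,
    (Matrix.isUnit_nonsing_inv_iff).2 hunit, isUnit_toMatrix' e.symm, hmul h1, hmul h2⟩

theorem exists_weakRepresentsE {m n : ℕ} (P : Pencil m n) : ∃ s, WeakRepresentsE P s := by
  obtain ⟨l, hl⟩ := exists_isModel_of_finrank_le _ _ _ P.1.mulVecLin P.2.mulVecLin le_rfl
  obtain ⟨hm, hn, h⟩ := hl.strictEquiv
  exact ⟨l, l, hm, hn, rfl, h⟩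

theorem Pencil.cast_dsum_zero {m n m' n' : ℕ} (X : Pencil 0 0) (M : Pencil m n)
    (hm : 0 + m = m') (hn : 0 + n = n') :
    Pencil.cast hm hn (Pencil.dsum X M) =
      Pencil.cast ((zero_add m).symm.trans hm) ((zero_add n).symm.trans hn) M := by
  subst hm hn
  have h : ∀ {k : ℕ} (i : Fin (0 + k)), i = Fin.natAdd 0 (finCongr (zero_add k) i) :=
    fun i => by ext; simp
  have key : ∀ (x : Matrix (Fin 0) (Fin 0) ℂ) (N : Matrix (Fin m) (Fin n) ℂ) (i : Fin (0 + m))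
      (j : Fin (0 + n)), fromBlocks x 0 0 N (finSumFinEquiv.symm i) (finSumFinEquiv.symm j) =
        N (finCongr (zero_add m) i) (finCongr (zero_add n) j) := fun x N i j => by
    conv_lhs => rw [h i, h j, finSumFinEquiv_symm_apply_natAdd, finSumFinEquiv_symm_apply_natAdd]
    rfl
  exact Prod.ext (Matrix.ext fun i j => key _ _ i j) (Matrix.ext fun i j => key _ _ i j)

theorem WeakRepresentsE.cons_zeroBlock {m n : ℕ} {P : Pencil m n} {s : Multiset KBlock}
    (h : WeakRepresentsE P s) (μ : Option ℂ) : WeakRepresentsE P (Eb μ 0 ::ₘ s) := by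
  obtain ⟨l, hm, hn, rfl, hl⟩ := h
  rcases μ with _ | μ
  · refine ⟨Eb none 0 :: l, (zero_add _).trans hm, (zero_add _).trans hn, rfl, ?_⟩
    exact (Pencil.cast_dsum_zero _ _ _ _).symm ▸ hl
  · refine ⟨Eb (some μ) 0 :: l, (zero_add _).trans hm, (zero_add _).trans hn, rfl, ?_⟩
    exact (Pencil.cast_dsum_zero _ _ _ _).symm ▸ hl

theorem WeakRepresentsE.add_zeroBlocks {m n : ℕ} {P : Pencil m n} {s z : Multiset KBlock}
    (h : WeakRepresentsE P s) (hz : IsZeroBlocks z) : WeakRepresentsE P (s + z) := by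
  induction z using Multiset.induction with
  | empty => rwa [add_zero]
  | cons b z ih =>
    obtain ⟨μ, rfl⟩ := hz b (Multiset.mem_cons_self b z)
    rw [Multiset.add_cons]
    exact (ih fun c hc => hz c (Multiset.mem_cons_of_mem hc)).cons_zeroBlock μ

end Model

/-- **Theorem 2.2**: if `orbᵉ P2 ⊆ closure (orbᵉ P1)`, then the Kronecker
canonical form of `P2` can be obtained from that of `P1` by a finite sequence
of structure transitions of the types G1–G6. -/
theorem kcf_trans_of_orbE_subset_closure {m n : ℕ} (P1 P2 : Pencil m n)
    (h : Pencil.orbE P2 ⊆ closure (Pencil.orbE P1)) :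
    ∃ s1 s2 : Multiset KBlock, WeakRepresentsE P1 s1 ∧ WeakRepresentsE P2 s2 ∧
      Relation.ReflTransGen TransG s1 s2 := by
  obtain ⟨s, hs⟩ := exists_weakRepresentsE P1
  obtain ⟨t, ht⟩ := exists_weakRepresentsE P2
  have hmem : P2 ∈ Pencil.orbE P2 := ⟨1, 1, isUnit_one, isUnit_one, by simp, by simp⟩
  obtain ⟨z, w, hz, hw, hzw⟩ := degen_of_mem_closure_orbE hs ht (h hmem)
  exact ⟨s + z, t + w, hs.add_zeroBlocks hz, ht.add_zeroBlocks hw, hzw⟩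
end
end

section
/- For all integers j, k with 1 ≤ j ≤ k, the congruence orbit of the skew-symmetric pencil M_{j−1} ⊕ M_{k+1} is contained in the closure of the congruence orbit of the skew-symmetric pencil M_j ⊕ M_k (both pencils have size (2j+2k+2) × (2j+2k+2)). -/
/-!
Basic framework: a complex `m × n` matrix pencil `A - λ B` is formalized as the
pair `(A, B)` of matrices.  We define strict equivalence, congruence,
skew-symmetry, orbits, direct sums, and the cover relations for the orbit
closure hierarchies (in the Euclidean topology).
-/

open Matrix

noncomputable section

/-- The rectangular matrix with ones on the `c`-th diagonal. -/
def shiftMat (m n : ℕ) (c : ℤ) : Matrix (Fin m) (Fin n) ℂ :=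
  Matrix.of fun i j => if (j : ℤ) = i + c then 1 else 0

/-- The rectangular matrix with a single one in its top left corner. -/
def cornerMat (m n : ℕ) : Matrix (Fin m) (Fin n) ℂ :=
  Matrix.of fun i j => if (i : ℤ) = 0 ∧ (j : ℤ) = 0 then 1 else 0

lemma Fmat_eq_shiftMat (m : ℕ) : Fmat m = shiftMat m (m + 1) 1 := by
  ext i j
  simp only [Fmat, shiftMat, of_apply]
  exact if_congr (by omega) rfl rfl

lemma Gmat_eq_shiftMat (m : ℕ) : Gmat m = shiftMat m (m + 1) 0 := by
  ext i j
  simp only [Gmat, shiftMat, of_apply]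
  exact if_congr (by omega) rfl rfl

lemma sum_fin_ite_int_eq (n : ℕ) (t : ℤ) (f : ℤ → ℂ) :
    ∑ x : Fin n, (if (x : ℤ) = t then f x else 0) = if 0 ≤ t ∧ t < n then f t else 0 := by
  split_ifs with h
  · rw [Finset.sum_eq_single (⟨t.toNat, by omega⟩ : Fin n)]
    · simp [h.1]
    · intro x _ hx
      refine if_neg fun hxt => hx (Fin.ext ?_)
      change (x : ℕ) = t.toNat
      omega
    · simp
  · exact Finset.sum_eq_zero fun x _ => if_neg (by omega)

lemma shiftMat_mul_apply {m n : ℕ} {ι : Type*} (c : ℤ) (f : ℤ → ι → ℂ) (i : Fin m) (l : ι) :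
    (shiftMat m n c * Matrix.of fun (x : Fin n) l => f x l) i l =
      if 0 ≤ (i : ℤ) + c ∧ (i : ℤ) + c < n then f (i + c) l else 0 := by
  simp only [mul_apply, shiftMat, of_apply, ite_mul, one_mul, zero_mul]
  exact sum_fin_ite_int_eq n _ fun x => f x l

lemma shiftMat_mul_shiftMat_apply {m n p : ℕ} (c d : ℤ) (i : Fin m) (l : Fin p) :
    (shiftMat m n c * shiftMat n p d) i l =
      if (0 ≤ (i : ℤ) + c ∧ (i : ℤ) + c < n) ∧ (l : ℤ) = i + c + d then 1 else 0 := by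
  rw [ite_and]
  exact shiftMat_mul_apply c (fun x (l : Fin p) => if (l : ℤ) = x + d then 1 else 0) i l

lemma shiftMat_mul_cornerMat_apply {m n p : ℕ} (c : ℤ) (i : Fin m) (l : Fin p) :
    (shiftMat m n c * cornerMat n p) i l =
      if (0 ≤ (i : ℤ) + c ∧ (i : ℤ) + c < n) ∧ (i : ℤ) + c = 0 ∧ (l : ℤ) = 0 then 1 else 0 := by
  rw [ite_and]
  exact shiftMat_mul_apply c (fun x (l : Fin p) => if x = 0 ∧ (l : ℤ) = 0 then 1 else 0) i l

lemma cornerMat_mul_shiftMat_apply {m n p : ℕ} (d : ℤ) (i : Fin m) (l : Fin p) :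
    (cornerMat m n * shiftMat n p d) i l =
      if (0 : ℤ) < n ∧ (i : ℤ) = 0 ∧ (l : ℤ) = d then 1 else 0 := by
  have h (x : Fin n) : cornerMat m n i x * shiftMat n p d x l =
      if (x : ℤ) = 0 then (fun y : ℤ => if (i : ℤ) = 0 ∧ (l : ℤ) = y + d then (1 : ℂ) else 0) x
      else 0 := by
    simp only [cornerMat, shiftMat, of_apply]
    split_ifs <;> first | omega | simp
  rw [mul_apply, Finset.sum_congr rfl fun x _ => h x]
  refine (sum_fin_ite_int_eq n 0 fun y => if (i : ℤ) = 0 ∧ (l : ℤ) = y + d then 1 else 0).trans ?_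
  simp [ite_and]

/-- The change of basis mixing a chain of length `p` with a chain of length `q + 1`. -/
def mixMat (p q : ℕ) (ε : ℂ) : Matrix (Fin (p + 1) ⊕ Fin q) (Fin p ⊕ Fin (q + 1)) ℂ :=
  fromBlocks (ε • shiftMat _ _ (-1)) (shiftMat _ _ 0) 0 (shiftMat _ _ 1)

/-- The inverse of `mixMat`, for `p ≤ q` and `ε ≠ 0`. -/
def mixMatInv (p q : ℕ) (ε : ℂ) : Matrix (Fin p ⊕ Fin (q + 1)) (Fin (p + 1) ⊕ Fin q) ℂ :=
  fromBlocks (ε⁻¹ • shiftMat _ _ 1) (-(ε⁻¹ • shiftMat _ _ 0)) (cornerMat _ _) (shiftMat _ _ (-1))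

lemma mixMatInv_mul_mixMat {p q : ℕ} (hpq : p ≤ q) {ε : ℂ} (hε : ε ≠ 0) :
    mixMatInv p q ε * mixMat p q ε = 1 := by
  rw [mixMatInv, mixMat, fromBlocks_multiply, ← fromBlocks_one]
  congr 1
  all_goals
    ext i l
    simp only [Matrix.mul_zero, add_zero, Matrix.smul_mul, Matrix.mul_smul, Matrix.neg_mul,
      smul_smul, mul_inv_cancel₀ hε, one_smul, Matrix.add_apply,
      Matrix.neg_apply, Matrix.smul_apply, smul_eq_mul, shiftMat_mul_shiftMat_apply,
      cornerMat_mul_shiftMat_apply, Matrix.zero_apply, Matrix.one_apply, Fin.ext_iff]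
  all_goals
    have := i.isLt
    have := l.isLt
    split_ifs <;> first | omega | (simp; done) | simp_all

lemma mixMat_mul_mixMatInv {p q : ℕ} (hpq : p ≤ q) {ε : ℂ} (hε : ε ≠ 0) :
    mixMat p q ε * mixMatInv p q ε = 1 :=
  (mul_eq_one_comm_of_card_eq _ _ _ (by
    simp only [Fintype.card_sum, Fintype.card_fin]; omega)).1 (mixMatInv_mul_mixMat hpq hε)

lemma fromBlocks_shiftMat_one_mul_mixMat {p q : ℕ} (hpq : p ≤ q) (ε : ℂ) :
    fromBlocks (shiftMat (p + 1) (p + 1 + 1) 1) 0 0 (shiftMat q (q + 1) 1) *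
        mixMat (p + 1) (q + 1) ε =
      mixMat p q ε * fromBlocks (shiftMat p (p + 1) 1) 0 (ε • cornerMat (q + 1) (p + 1))
        (shiftMat (q + 1) (q + 1 + 1) 1) := by
  rw [mixMat, mixMat, fromBlocks_multiply, fromBlocks_multiply]
  refine congr (congr (congr (congrArg _ ?_) ?_) ?_) ?_
  all_goals
    ext i l
    simp only [Matrix.mul_zero, Matrix.zero_mul, smul_zero, add_zero, zero_add, Matrix.smul_mul,
      Matrix.mul_smul, Matrix.add_apply, Matrix.smul_apply, smul_eq_mul,
      shiftMat_mul_shiftMat_apply, shiftMat_mul_cornerMat_apply, Matrix.zero_apply]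
  all_goals
    have := i.isLt
    have := l.isLt
    split_ifs <;> first | omega | simp

lemma fromBlocks_shiftMat_zero_mul_mixMat {p q : ℕ} (hpq : p ≤ q) (ε : ℂ) :
    fromBlocks (shiftMat (p + 1) (p + 1 + 1) 0) 0 0 (shiftMat q (q + 1) 0) *
        mixMat (p + 1) (q + 1) ε =
      mixMat p q ε * fromBlocks (shiftMat p (p + 1) 0) 0 0
        (shiftMat (q + 1) (q + 1 + 1) 0) := by
  rw [mixMat, mixMat, fromBlocks_multiply, fromBlocks_multiply]
  refine congr (congr (congr (congrArg _ ?_) ?_) ?_) ?_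
  all_goals
    ext i l
    simp only [Matrix.mul_zero, Matrix.zero_mul, smul_zero, add_zero, zero_add, Matrix.smul_mul,
      Matrix.mul_smul, Matrix.smul_apply, smul_eq_mul,
      shiftMat_mul_shiftMat_apply]
  all_goals
    have := i.isLt
    have := l.isLt
    split_ifs <;> first | omega | simp

/-- The skew-symmetric matrix `[[0, X], [-Xᵀ, 0]]`, with its indices transported along `e`. -/
def skewReindex {ι α β : Type*} (e : ι ≃ α ⊕ β) (X : Matrix α β ℂ) : Matrix ι ι ℂ :=
  (fromBlocks 0 X (-Xᵀ) 0).submatrix e e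

lemma continuous_skewReindex {ι α β : Type*} (e : ι ≃ α ⊕ β) :
    Continuous (skewReindex e) := by
  unfold skewReindex
  fun_prop

lemma congruent_skewReindex {n : ℕ} {α β α' β' : Type*}
    [Fintype α] [Fintype β] [Fintype α'] [Fintype β']
    [DecidableEq α] [DecidableEq β] [DecidableEq α'] [DecidableEq β']
    (e : Fin n ≃ α ⊕ β) (e' : Fin n ≃ α' ⊕ β')
    {U : Matrix α α' ℂ} {U' : Matrix α' α ℂ} {V : Matrix β β' ℂ} {V' : Matrix β' β ℂ}
    (hU : U' * U = 1) (hU' : U * U' = 1) (hV : V * V' = 1)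
    {X Y : Matrix α β ℂ} {X' Y' : Matrix α' β' ℂ}
    (hX : X * V = U * X') (hY : Y * V = U * Y') :
    Pencil.Congruent (skewReindex e X, skewReindex e Y) (skewReindex e' X', skewReindex e' Y') := by
  have key {Z : Matrix α β ℂ} {Z' : Matrix α' β' ℂ} (hZ : Z * V = U * Z') :
      ((fromBlocks U'ᵀ 0 0 V).submatrix e e')ᵀ * skewReindex e Z *
        (fromBlocks U'ᵀ 0 0 V).submatrix e e' = skewReindex e' Z' := by
    have h : U' * (Z * V) = Z' := by rw [hZ, ← Matrix.mul_assoc, hU, Matrix.one_mul]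
    have h' : Vᵀ * (Zᵀ * U'ᵀ) = Z'ᵀ := by
      rw [← h, transpose_mul, transpose_mul, Matrix.mul_assoc]
    simp only [skewReindex, transpose_submatrix, submatrix_mul_equiv, fromBlocks_transpose,
      fromBlocks_multiply, transpose_transpose, transpose_zero, Matrix.mul_zero, Matrix.zero_mul,
      add_zero, zero_add, Matrix.mul_assoc, Matrix.mul_neg, Matrix.neg_mul, neg_zero, h, h']
  refine ⟨(fromBlocks U'ᵀ 0 0 V).submatrix e e', ?_, key hX, key hY⟩
  refine IsUnit.of_mul_eq_one ((fromBlocks Uᵀ 0 0 V').submatrix e' e) ?_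
  rw [submatrix_mul_equiv, fromBlocks_multiply]
  simp [← transpose_mul, hU', hV]

/-- The rearrangement of the indices of a direct sum of two skew-symmetric block matrices. -/
def skewSumEquiv {n p q p' q' : ℕ} (h : n = p + q + (p' + q')) :
    Fin n ≃ (Fin p ⊕ Fin p') ⊕ (Fin q ⊕ Fin q') :=
  (finCongr h).trans (finSumFinEquiv.symm.trans
    ((Equiv.sumCongr finSumFinEquiv.symm finSumFinEquiv.symm).trans
      (Equiv.sumSumSumComm _ _ _ _)))

lemma dsum_skewPair_submatrix {n p q p' q' : ℕ} (h : n = p + q + (p' + q'))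
    (X : Matrix (Fin p) (Fin q) ℂ) (Y : Matrix (Fin p') (Fin q') ℂ) :
    ((fromBlocks (skewPair X) 0 0 (skewPair Y)).submatrix finSumFinEquiv.symm
      finSumFinEquiv.symm).submatrix (finCongr h) (finCongr h) =
      skewReindex (skewSumEquiv h) (fromBlocks X 0 0 Y) := by
  ext i l
  simp only [skewReindex, skewSumEquiv, skewPair, submatrix_apply, Equiv.trans_apply]
  generalize finSumFinEquiv.symm (finCongr h i) = x
  generalize finSumFinEquiv.symm (finCongr h l) = y
  rcases x with x | x <;> rcases y with y | y <;>
    simp only [fromBlocks_apply₁₁, fromBlocks_apply₁₂, fromBlocks_apply₂₁, fromBlocks_apply₂₂,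
      Equiv.sumCongr_apply, Sum.map_inl, Sum.map_inr, submatrix_apply] <;>
    generalize finSumFinEquiv.symm x = x <;> generalize finSumFinEquiv.symm y = y <;>
    rcases x with x | x <;> rcases y with y | y <;> simp

lemma cast_dsum_Mblk {n a b : ℕ} (h : a + (a + 1) + (b + (b + 1)) = n) :
    Pencil.cast h h (Pencil.dsum (Mblk a) (Mblk b)) =
      (skewReindex (skewSumEquiv h.symm)
        (fromBlocks (shiftMat a (a + 1) 1) 0 0 (shiftMat b (b + 1) 1)),
       skewReindex (skewSumEquiv h.symm)
        (fromBlocks (shiftMat a (a + 1) 0) 0 0 (shiftMat b (b + 1) 0))) := by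
  simp only [← Fmat_eq_shiftMat, ← Gmat_eq_shiftMat, ← dsum_skewPair_submatrix]
  rfl

lemma Pencil.Congruent.trans {n : ℕ} {P Q R : Pencil n n}
    (h : Pencil.Congruent P Q) (h' : Pencil.Congruent Q R) : Pencil.Congruent P R := by
  obtain ⟨S, hS, h1, h2⟩ := h
  obtain ⟨T, hT, h3, h4⟩ := h'
  refine ⟨S * T, hS.mul hT, ?_, ?_⟩
  · rw [← h3, ← h1, transpose_mul]
    simp only [Matrix.mul_assoc]
  · rw [← h4, ← h2, transpose_mul]
    simp only [Matrix.mul_assoc]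

/-- **Rule 1 transition as an orbit closure inclusion**: for `1 ≤ j ≤ k`,
`orbᶜ (M_{j-1} ⊕ M_{k+1}) ⊆ closure (orbᶜ (M_j ⊕ M_k))`. -/
theorem orbC_M_split_subset_closure (j k : ℕ) (hj : 1 ≤ j) (hjk : j ≤ k) :
    Pencil.orbC (Pencil.cast (by omega) (by omega)
        (Pencil.dsum (Mblk (j - 1)) (Mblk (k + 1))) :
          Pencil (2 * j + 2 * k + 2) (2 * j + 2 * k + 2)) ⊆
      closure (Pencil.orbC (Pencil.cast (by omega) (by omega)
        (Pencil.dsum (Mblk j) (Mblk k)) :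
          Pencil (2 * j + 2 * k + 2) (2 * j + 2 * k + 2))) := by
  obtain ⟨p, rfl⟩ : ∃ p, j = p + 1 := ⟨j - 1, by omega⟩
  have h : 2 * (p + 1) + 2 * k + 2 = p + (p + 1) + (k + 1 + (k + 1 + 1)) := by omega
  change Pencil.orbC (Pencil.cast h.symm h.symm (Pencil.dsum (Mblk p) (Mblk (k + 1)))) ⊆ _
  rw [cast_dsum_Mblk, cast_dsum_Mblk]
  rintro R ⟨T, hT, hA, hB⟩
  let X (ε : ℂ) := skewReindex (skewSumEquiv h)
    (fromBlocks (shiftMat p (p + 1) 1) 0 (ε • cornerMat (k + 1) (p + 1))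
      (shiftMat (k + 1) (k + 1 + 1) 1))
  let Y := skewReindex (skewSumEquiv h)
    (fromBlocks (shiftMat p (p + 1) 0) 0 0 (shiftMat (k + 1) (k + 1 + 1) 0))
  let f (ε : ℂ) : Pencil (2 * (p + 1) + 2 * k + 2) (2 * (p + 1) + 2 * k + 2) :=
    (Tᵀ * X ε * T, Tᵀ * Y * T)
  have hX : Continuous X := (continuous_skewReindex _).comp (by fun_prop)
  have hf : Continuous f := by fun_prop
  have hf0 : f 0 = R := by
    refine Prod.ext (Eq.trans ?_ hA) hB
    simp only [f, X, zero_smul]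
  rw [← hf0]
  refine map_mem_closure hf (dense_compl_singleton (0 : ℂ) 0) fun ε hε => ?_
  have hpk : p ≤ k := by omega
  exact (congruent_skewReindex _ (skewSumEquiv h) (mixMatInv_mul_mixMat hpk hε)
    (mixMat_mul_mixMatInv hpk hε) (mixMat_mul_mixMatInv (Nat.succ_le_succ hpk) hε)
    (fromBlocks_shiftMat_one_mul_mixMat hpk ε)
    (fromBlocks_shiftMat_zero_mul_mixMat hpk ε)).trans ⟨T, hT, rfl, rfl⟩
end
end
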